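/- arXiv:2411.07275 — 3 statements merged into one kernel-verified Lean document; each statement's English description precedes it below -/
import Mathlib

section
/- The equivalence problem for erasing pattern languages with regular constraints is undecidable: for the binary alphabet Σ = {0,#} there is no algorithm that, given two patterns with regular constraints (α, r_α) and (β, r_β), decides whether L_E(α, r_α) = L_E(β, r_β). Formally, the predicate on encoded input pairs ((α, r_α), (β, r_β)) — where α, β are finite words over Σ ∪ ℕ and r_α, r_β are given as finite association lists assigning to finitely many variables a regular expression over Σ, all unlisted variables being constrained to Σ* — defined by 'L_E(α, r_α) = L_E(β, r_β)' is not a computable predicate. -/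
/-- The binary alphabet `{0, #}`: `false` represents `0`, `true` represents `#`. -/
abbrev Bin := Bool

/-- Patterns over `Σ ∪ X` with `Σ = Bin` and variable set `X = ℕ`. -/
abbrev Pattern := List (Bin ⊕ ℕ)

/-- Applying a substitution (determined by its action on variables, and fixing every
terminal) to a pattern; this is the restriction of the induced monoid morphism
`(Σ ∪ X)* → Σ*`. -/
def applySub (s : ℕ → List Bin) : Pattern → List Bin
  | [] => []
  | c :: p => Sum.elim (fun a => [a]) s c ++ applySub s p

/-- The set of variables occurring in a pattern. -/
def varsOf (p : Pattern) : Set ℕ := {x | Sum.inr x ∈ p}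

/-- A substitution is `r`-valid on `p` if every variable occurring in `p` is mapped into
its constraint language. -/
def Valid (r : ℕ → Set (List Bin)) (p : Pattern) (s : ℕ → List Bin) : Prop :=
  ∀ x ∈ varsOf p, s x ∈ r x

/-- The erasing constrained pattern language `L_E(p, r)`. -/
def LangE (p : Pattern) (r : ℕ → Set (List Bin)) : Set (List Bin) :=
  {w | ∃ s, Valid r p s ∧ applySub s p = w}

/-- A regular constraint, given as a finite association list assigning regular
expressions to finitely many variables. -/
abbrev RegConstraint := List (ℕ × RegularExpression Bin)

/-- The constraint described by an association list: unlisted variables are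
constrained to `Σ*`. -/
def constraintOf (l : RegConstraint) : ℕ → Set (List Bin) := fun x =>
  match l.lookup x with
  | some e => (e.matches' : Set (List Bin))
  | none => Set.univ

/-- A standard injective encoding of regular expressions into `ℕ`. -/
def encRE : RegularExpression Bin → ℕ
  | .zero => Nat.pair 0 0
  | .epsilon => Nat.pair 1 0
  | .char a => Nat.pair 2 (Encodable.encode a)
  | .plus r s => Nat.pair 3 (Nat.pair (encRE r) (encRE s))
  | .comp r s => Nat.pair 4 (Nat.pair (encRE r) (encRE s))
  | .star r => Nat.pair 5 (encRE r)

/-- A standard encoding of an input pair `((α, r_α), (β, r_β))` into `ℕ`. -/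
def encodeInput (inp : (Pattern × RegConstraint) × (Pattern × RegConstraint)) : ℕ :=
  Encodable.encode ((inp.1.1, inp.1.2.map fun q => (q.1, encRE q.2)),
                    (inp.2.1, inp.2.2.map fun q => (q.1, encRE q.2)))

/-!
The halting problem is reduced to equivalence. A program for `Turing.ToPartrec` is turned into a
rewriting system that acts deterministically on words, so that the program halts if and only if some
word lists the successive configurations of a run that reaches the halting configuration. A word of
the right shape fails to list such a run exactly when it has an error: between two consecutive
separators stands an instance of the left-hand side of a rule, and what follows differs from the
corresponding instance of the right-hand side. Since the two sides of a rule share their variables,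
having an error is membership in a finite union of pattern languages.

A single pattern over the binary alphabet represents this union. Each letter of its `i`-th component
is a variable constrained to be that letter or empty, and a leading variable takes either the empty
word, so that the other factors make up the word, or a proper extension of some coded word, which
absorbs whatever the other factors contribute. If the leading variable is also allowed to be the
code of a word that has the shape of a halting run, then the language grows exactly when one of
these words has no error, that is, when the program halts.
-/

namespace ErasingPattern

open Encodable

section Lists

variable {α β : Type}

theorem append_cons_inj_of_notMem_left {a₁ a₂ : α} {s₁ s₂ t₁ t₂ : List α} (h₁ : a₁ ∉ s₂)
    (h₂ : a₂ ∉ s₁) (h : s₁ ++ a₁ :: t₁ = s₂ ++ a₂ :: t₂) : s₁ = s₂ ∧ a₁ = a₂ ∧ t₁ = t₂ := by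
  induction s₁ generalizing s₂ <;> cases s₂ <;> grind

theorem flatMap_eq_of_eq_nil {f : α → List β} {l : List α} {a : α} (hl : l.Nodup) (ha : a ∈ l)
    (h : ∀ b ≠ a, f b = []) : l.flatMap f = f a := by
  obtain ⟨s, t, rfl⟩ := List.append_of_mem ha
  rw [List.nodup_middle, List.nodup_cons, List.mem_append, not_or] at hl
  have hnil {r : List α} (hr : a ∉ r) : r.flatMap f = [] :=
    List.flatMap_eq_nil_iff.2 fun b hb => h b fun hba => hr (hba ▸ hb)
  rw [List.flatMap_append, List.flatMap_cons, hnil hl.1.1, hnil hl.1.2, List.nil_append,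
    List.append_nil]

end Lists

section Patterns

variable {Γ V W : Type}

/-- Patterns over an arbitrary alphabet `Γ` and an arbitrary type `V` of variables. -/
abbrev WordPattern (Γ V : Type) := List (Γ ⊕ V)

/-- The word obtained from a pattern by a substitution, given by its values on variables. -/
def inst (σ : V → List Γ) (p : WordPattern Γ V) : List Γ :=
  p.flatMap (Sum.elim (fun a => [a]) σ)

/-- The pattern obtained by substituting patterns for the variables of a pattern. -/
def expand (θ : V → WordPattern Γ W) (p : WordPattern Γ V) : WordPattern Γ W :=
  p.flatMap (Sum.elim (fun a => [Sum.inl a]) θ)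

/-- The words all of whose letters lie in `S`. -/
def wordsOver (S : Set Γ) : Language Γ := {w | ∀ a ∈ w, a ∈ S}

/-- The erasing pattern language of `p` in which the variable `x` ranges over `C x`. -/
def patternLanguage (C : V → Language Γ) (p : WordPattern Γ V) : Language Γ :=
  {w | ∃ σ, (∀ x, σ x ∈ C x) ∧ inst σ p = w}

@[simp]
theorem inst_nil (σ : V → List Γ) : inst σ [] = [] := rfl

@[simp]
theorem inst_inl_cons (σ : V → List Γ) (a : Γ) (p : WordPattern Γ V) :
    inst σ (Sum.inl a :: p) = a :: inst σ p := rfl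

@[simp]
theorem inst_inr_cons (σ : V → List Γ) (x : V) (p : WordPattern Γ V) :
    inst σ (Sum.inr x :: p) = σ x ++ inst σ p := rfl

@[simp]
theorem inst_append (σ : V → List Γ) (p q : WordPattern Γ V) :
    inst σ (p ++ q) = inst σ p ++ inst σ q := List.flatMap_append

theorem inst_flatMap {ι : Type} (σ : V → List Γ) (l : List ι) (f : ι → WordPattern Γ V) :
    inst σ (l.flatMap f) = l.flatMap fun i => inst σ (f i) := List.flatMap_assoc

theorem inst_expand (σ : W → List Γ) (θ : V → WordPattern Γ W) (p : WordPattern Γ V) :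
    inst σ (expand θ p) = inst (fun x => inst σ (θ x)) p := by
  rw [expand, inst_flatMap]
  refine List.flatMap_congr fun c _ => ?_
  cases c <;> simp

theorem inst_congr {σ τ : V → List Γ} {p : WordPattern Γ V}
    (h : ∀ x, Sum.inr x ∈ p → σ x = τ x) : inst σ p = inst τ p := by
  refine List.flatMap_congr fun c hc => ?_
  cases c with
  | inl a => rfl
  | inr x => exact h x hc

theorem mem_inst {σ : V → List Γ} {p : WordPattern Γ V} {a : Γ} :
    a ∈ inst σ p ↔ Sum.inl a ∈ p ∨ ∃ x, Sum.inr x ∈ p ∧ a ∈ σ x := by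
  simp [inst]

@[simp]
theorem nil_mem_wordsOver {S : Set Γ} : [] ∈ wordsOver S := fun _ h => absurd h List.not_mem_nil

@[simp]
theorem cons_mem_wordsOver {S : Set Γ} {a : Γ} {u : List Γ} :
    a :: u ∈ wordsOver S ↔ a ∈ S ∧ u ∈ wordsOver S := List.forall_mem_cons

@[simp]
theorem append_mem_wordsOver {S : Set Γ} {u v : List Γ} :
    u ++ v ∈ wordsOver S ↔ u ∈ wordsOver S ∧ v ∈ wordsOver S := List.forall_mem_append

end Patterns

section Transfer

variable {V : Type} [Encodable V]

/-- A pattern over `Bin` with numbered variables. -/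
def toPattern (p : WordPattern Bin V) : Pattern := p.map (Sum.map id encode)

/-- The association list that constrains each variable `x` of `p` to the language of `e x`. -/
def toConstraint (p : WordPattern Bin V) (e : V → RegularExpression Bin) : RegConstraint :=
  (p.filterMap Sum.getRight?).map fun x => (encode x, e x)

theorem applySub_toPattern (s : ℕ → List Bin) (p : WordPattern Bin V) :
    applySub s (toPattern p) = inst (fun x => s (encode x)) p := by
  induction p with
  | nil => rfl
  | cons c p ih => cases c <;> simpa [toPattern, applySub] using ih

theorem inr_encode_mem_toPattern {p : WordPattern Bin V} {x : V} :
    Sum.inr (encode x) ∈ toPattern p ↔ Sum.inr x ∈ p := by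
  simp [toPattern]

theorem lookup_map_encode (e : V → RegularExpression Bin) {x : V} {l : List V} (hx : x ∈ l) :
    (l.map fun y => (encode y, e y)).lookup (encode x) = some (e x) := by
  induction l with
  | nil => simp at hx
  | cons y l ih =>
    by_cases hxy : x = y
    · simp [hxy]
    · have hne : encode x ≠ encode y := fun h => hxy (encode_injective h)
      simpa [List.lookup_cons, hne, beq_eq_false_iff_ne.2 hne] using
        ih ((List.mem_cons.1 hx).resolve_left hxy)

theorem mem_constraintOf_toConstraint (e : V → RegularExpression Bin) {p : WordPattern Bin V}
    {x : V} (hx : Sum.inr x ∈ p) (w : List Bin) :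
    w ∈ constraintOf (toConstraint p e) (encode x) ↔ w ∈ (e x).matches' := by
  have hmem : x ∈ p.filterMap Sum.getRight? := List.mem_filterMap.2 ⟨_, hx, rfl⟩
  simp only [constraintOf, toConstraint, lookup_map_encode e hmem]
  rfl

theorem langE_toPattern (p : WordPattern Bin V) (e : V → RegularExpression Bin)
    (he : ∀ x, [] ∈ (e x).matches') :
    LangE (toPattern p) (constraintOf (toConstraint p e)) =
      patternLanguage (fun x => (e x).matches') p := by
  classical
  ext w
  constructor
  · rintro ⟨s, hs, rfl⟩
    refine ⟨fun x => if Sum.inr x ∈ p then s (encode x) else [], fun x => ?_, ?_⟩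
    · dsimp only
      split_ifs with hx
      · exact (mem_constraintOf_toConstraint e hx _).1 (hs _ (inr_encode_mem_toPattern.2 hx))
      · exact he x
    · rw [applySub_toPattern]
      exact inst_congr fun x hx => if_pos hx
  · rintro ⟨σ, hσ, rfl⟩
    refine ⟨fun n => (decode n).elim [] σ, fun n hn => ?_, ?_⟩
    · obtain ⟨c, hc, hcn⟩ := List.mem_map.1 hn
      obtain a | x := c
      · cases hcn
      · obtain rfl : encode x = n := by simpa using hcn
        simpa using (mem_constraintOf_toConstraint e hc _).2 (hσ x)
    · rw [applySub_toPattern]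
      simp

end Transfer

section BinaryCoding

variable {Γ : Type} [Encodable Γ]

/-- The binary code word `0…0#` of a letter. -/
def letterCode (a : Γ) : List Bin := List.replicate (encode a + 1) false ++ [true]

/-- The binary code of a word, letter by letter. -/
def encodeWord (u : List Γ) : List Bin := u.flatMap letterCode

/-- The binary code of a word between the markers `#0#` and `#`. No code of a word starts with `#`,
so the markers determine where a framed word begins and ends. -/
def frame (u : List Γ) : List Bin := [true, false, true] ++ encodeWord u ++ [true]

@[simp]
theorem encodeWord_nil : encodeWord ([] : List Γ) = [] := rfl

@[simp]
theorem encodeWord_cons (a : Γ) (u : List Γ) :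
    encodeWord (a :: u) = letterCode a ++ encodeWord u := rfl

theorem encodeWord_append (u v : List Γ) : encodeWord (u ++ v) = encodeWord u ++ encodeWord v :=
  List.flatMap_append

theorem letterCode_append_inj {a b : Γ} {r s : List Bin}
    (h : letterCode a ++ r = letterCode b ++ s) : a = b ∧ r = s := by
  simp only [letterCode, List.append_assoc, List.singleton_append] at h
  obtain ⟨hab, -, hrs⟩ := append_cons_inj_of_notMem_left (by simp) (by simp) h
  have hlen := congrArg List.length hab
  simp only [List.length_replicate, Nat.add_right_cancel_iff] at hlen
  exact ⟨encode_injective hlen, hrs⟩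

theorem encodeWord_append_eq_true_cons {u : List Γ} {r s : List Bin}
    (h : encodeWord u ++ r = true :: s) : u = [] := by
  cases u with
  | nil => rfl
  | cons a u => simp [letterCode, List.replicate_succ] at h

theorem encodeWord_append_true_inj {u v : List Γ} {r s : List Bin}
    (h : encodeWord u ++ true :: r = encodeWord v ++ true :: s) : u = v ∧ r = s := by
  induction u generalizing v with
  | nil =>
    obtain rfl := encodeWord_append_eq_true_cons h.symm
    simpa using h
  | cons a u ih =>
    cases v with
    | nil => exact absurd (encodeWord_append_eq_true_cons h) (List.cons_ne_nil _ _)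
    | cons b v =>
      simp only [encodeWord_cons, List.append_assoc] at h
      obtain ⟨rfl, htail⟩ := letterCode_append_inj h
      simpa using ih htail

theorem frame_append_inj {u v : List Γ} {r s : List Bin} (h : frame u ++ r = frame v ++ s) :
    u = v ∧ r = s := by
  simp only [frame, List.append_assoc, List.append_cancel_left_eq, List.singleton_append] at h
  exact encodeWord_append_true_inj h

/-- The regular expression matching exactly the word `w`. -/
def wordRE (w : List Bin) : RegularExpression Bin := (w.map RegularExpression.char).prod

/-- The regular expression matching the codes of the words over the alphabet `A`. -/
def codesRE (A : List Γ) : RegularExpression Bin :=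
  .star (A.map fun a => wordRE (letterCode a)).sum

theorem matches'_wordRE (w : List Bin) : (wordRE w).matches' = ({w} : Set (List Bin)) := by
  induction w with
  | nil => rfl
  | cons b w ih =>
    have hcons : wordRE (b :: w) = .char b * wordRE w := List.prod_cons
    rw [hcons, RegularExpression.matches'_mul, ih]
    exact Set.image2_singleton

theorem mem_wordRE {w v : List Bin} : v ∈ (wordRE w).matches' ↔ v = w := by
  rw [matches'_wordRE]
  rfl

theorem mem_sum_wordRE {A : List Γ} {v : List Bin} :
    v ∈ (A.map fun a => wordRE (letterCode a)).sum.matches' ↔ ∃ a ∈ A, v = letterCode a := by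
  induction A with
  | nil => simp [RegularExpression.matches'_zero, Language.notMem_zero]
  | cons a A ih =>
    rw [List.map_cons, List.sum_cons, RegularExpression.matches'_add, Language.mem_add, ih,
      mem_wordRE, List.exists_mem_cons_iff]

theorem mem_codesRE {A : List Γ} {v : List Bin} :
    v ∈ (codesRE A).matches' ↔ ∃ u ∈ wordsOver {a | a ∈ A}, encodeWord u = v := by
  rw [codesRE, RegularExpression.matches'_star, Language.mem_kstar]
  constructor
  · rintro ⟨l, rfl, hl⟩
    induction l with
    | nil => exact ⟨[], nil_mem_wordsOver, rfl⟩
    | cons y l ih =>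
      obtain ⟨u, hu, huv⟩ := ih fun z hz => hl z (List.mem_cons_of_mem _ hz)
      obtain ⟨a, ha, rfl⟩ := mem_sum_wordRE.1 (hl y List.mem_cons_self)
      exact ⟨a :: u, cons_mem_wordsOver.2 ⟨ha, hu⟩, by simp [huv]⟩
  · rintro ⟨u, hu, rfl⟩
    refine ⟨u.map letterCode, rfl, fun y hy => ?_⟩
    obtain ⟨a, ha, rfl⟩ := List.mem_map.1 hy
    exact mem_sum_wordRE.2 ⟨a, hu a ha, rfl⟩

end BinaryCoding

section Union

variable {Γ V : Type} [Encodable Γ]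

/-- The variables of a pattern representing a union of patterns indexed by `ι`. -/
inductive UnionVar (ι V : Type) where
  /-- stands for a word that may dominate the whole pattern -/
  | lead
  /-- stands for `b` if component `i` is switched on, and for `[]` otherwise -/
  | bit (i : ι) (b : Bin)
  /-- stands for the code of the value of the variable `x` of component `i` -/
  | data (i : ι) (x : V)
  deriving Encodable

/-- The framed code of a pattern, with all terminals replaced by the bit variables of
component `i`. -/
def unionComponent {ι : Type} (i : ι) (p : WordPattern Γ V) : WordPattern Bin (UnionVar ι V) :=
  let bits (w : List Bin) : WordPattern Bin (UnionVar ι V) := w.map fun b => .inr (.bit i b)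
  bits [true, false, true] ++
    p.flatMap (Sum.elim (fun a => bits (letterCode a)) fun x => [.inr (.data i x)]) ++ bits [true]

/-- The pattern that represents the union of the languages of the patterns `ps i`. -/
def unionPattern {n : ℕ} (ps : Fin n → WordPattern Γ V) : WordPattern Bin (UnionVar (Fin n) V) :=
  .inr .lead :: (List.finRange n).flatMap fun i => unionComponent i (ps i)

/-- The constraints for a union pattern whose data variables `x` range over codes of words over
`L x`. -/
def unionRE {ι : Type} (L : V → List Γ) (e : RegularExpression Bin) :
    UnionVar ι V → RegularExpression Bin
  | .lead => e
  | .bit _ b => 1 + .char b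
  | .data _ x => codesRE (L x)

/-- Matches `[]` and all nonempty right extensions of framed words over `A`. -/
def decoyRE (A : List Γ) : RegularExpression Bin :=
  1 + wordRE [true, false, true] * codesRE A * wordRE [true] *
    ((.char true + .char false) * .star (.char true + .char false))

theorem mem_one_add_char {b : Bin} {v : List Bin} :
    v ∈ (1 + .char b : RegularExpression Bin).matches' ↔ v = [] ∨ v = [b] := Iff.rfl

theorem mem_char_add_star {v : List Bin} :
    v ∈ ((.char true + .char false) * .star (.char true + .char false) :
      RegularExpression Bin).matches' ↔ v ≠ [] := by
  have hletter (b : Bin) : [b] ∈ (.char true + .char false : RegularExpression Bin).matches' := by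
    cases b
    exacts [.inr rfl, .inl rfl]
  rw [RegularExpression.matches'_mul, RegularExpression.matches'_star, Language.mem_mul]
  constructor
  · rintro ⟨s, rfl | rfl, t, -, rfl⟩ <;> simp
  · intro hv
    obtain ⟨b, t, rfl⟩ := List.exists_cons_of_ne_nil hv
    refine ⟨[b], hletter b, t, Language.mem_kstar.2 ⟨t.map ([·]), ?_, fun y hy => ?_⟩, rfl⟩
    · simp [← List.flatMap_def]
    · obtain ⟨c, -, rfl⟩ := List.mem_map.1 hy
      exact hletter c

theorem mem_decoyRE {A : List Γ} {v : List Bin} :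
    v ∈ (decoyRE A).matches' ↔
      v = [] ∨ ∃ u ∈ wordsOver {a | a ∈ A}, ∃ r ≠ [], frame u ++ r = v := by
  simp only [decoyRE, RegularExpression.matches'_add, RegularExpression.matches'_mul,
    Language.mem_add, Language.mem_mul, mem_wordRE, mem_codesRE]
  refine or_congr Iff.rfl ⟨?_, ?_⟩
  · rintro ⟨_, ⟨_, ⟨_, rfl, _, ⟨u, hu, rfl⟩, rfl⟩, _, rfl, rfl⟩, r, hr, rfl⟩
    exact ⟨u, hu, r, mem_char_add_star.1 hr, rfl⟩
  · rintro ⟨u, hu, r, hr, rfl⟩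
    exact ⟨_, ⟨_, ⟨_, rfl, _, ⟨u, hu, rfl⟩, rfl⟩, _, rfl, rfl⟩, r, mem_char_add_star.2 hr, rfl⟩

section Components

variable {ι : Type} {σ : UnionVar ι V → List Bin} {L : V → List Γ} {e : RegularExpression Bin}

theorem inst_unionComponent (σ : UnionVar ι V → List Bin) (i : ι) (p : WordPattern Γ V) :
    inst σ (unionComponent i p) =
      σ (.bit i true) ++ σ (.bit i false) ++ σ (.bit i true) ++
        p.flatMap (Sum.elim (fun a => (letterCode a).flatMap fun b => σ (.bit i b))
          fun x => σ (.data i x)) ++ σ (.bit i true) := by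
  have hbits (w : List Bin) :
      inst σ (w.map fun b => .inr (.bit i b)) = w.flatMap fun b => σ (.bit i b) :=
    List.flatMap_map ..
  simp only [unionComponent, inst_append, inst_flatMap, hbits]
  congr 1
  · congr 1
    · simp
    · refine List.flatMap_congr fun c _ => ?_
      cases c <;> simp [hbits]
  · simp

theorem encodeWord_inst (τ : V → List Γ) (p : WordPattern Γ V) :
    encodeWord (inst τ p) =
      p.flatMap (Sum.elim letterCode fun x => encodeWord (τ x)) := by
  rw [encodeWord, inst, List.flatMap_assoc]
  refine List.flatMap_congr fun c _ => ?_
  cases c <;> simp [encodeWord]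

theorem inst_unionComponent_on {i : ι} {p : WordPattern Γ V} {τ : V → List Γ}
    (hbit : ∀ b, σ (.bit i b) = [b]) (hdata : ∀ x, σ (.data i x) = encodeWord (τ x)) :
    inst σ (unionComponent i p) = frame (inst τ p) := by
  simp [inst_unionComponent, hbit, hdata, frame, encodeWord_inst]

theorem inst_unionComponent_off {i : ι} {p : WordPattern Γ V} {τ : V → List Γ}
    (hbit : ∀ b, σ (.bit i b) = []) (hdata : ∀ x, σ (.data i x) = encodeWord (τ x)) :
    ∃ u : List Γ, inst σ (unionComponent i p) = encodeWord u := by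
  refine ⟨p.flatMap (Sum.elim (fun _ => []) τ), ?_⟩
  rw [encodeWord, List.flatMap_assoc]
  simp only [inst_unionComponent, hbit, hdata, List.nil_append, List.append_nil]
  refine List.flatMap_congr fun c _ => ?_
  cases c <;> simp [encodeWord]

theorem unionComponent_of_prefix_frame {i : ι} {p : WordPattern Γ V} {u : List Γ} {r : List Bin}
    (hσ : ∀ y, σ y ∈ (unionRE L e y).matches') (h : inst σ (unionComponent i p) ++ r = frame u) :
    inst σ (unionComponent i p) = [] ∨
      u ∈ patternLanguage (fun x => wordsOver {a | a ∈ L x}) p := by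
  choose τ hτ hdata using fun x => mem_codesRE.1 (hσ (.data i x))
  have hbit (b : Bin) := mem_one_add_char.1 (hσ (.bit i b))
  rcases hbit true with h₁ | h₁ <;> rcases hbit false with h₀ | h₀
  · obtain ⟨v, hv⟩ := inst_unionComponent_off (p := p) (Bool.forall_bool.2 ⟨h₀, h₁⟩)
      fun x => (hdata x).symm
    rw [hv] at h ⊢
    exact .inl (by rw [encodeWord_append_eq_true_cons h, encodeWord_nil])
  · simp [inst_unionComponent, h₀, h₁, frame] at h
  · simp [inst_unionComponent, h₀, h₁, frame] at h
  · rw [inst_unionComponent_on (Bool.forall_bool.2 ⟨h₀, h₁⟩) fun x => (hdata x).symm,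
      ← List.append_nil (frame u)] at h
    exact .inr ⟨τ, hτ, (frame_append_inj h).1⟩

theorem exists_component_of_flatMap_eq_frame {I : List ι} {ps : ι → WordPattern Γ V} {u : List Γ}
    (hσ : ∀ y, σ y ∈ (unionRE L e y).matches')
    (h : inst σ (I.flatMap fun i => unionComponent i (ps i)) = frame u) :
    ∃ i, u ∈ patternLanguage (fun x => wordsOver {a | a ∈ L x}) (ps i) := by
  induction I with
  | nil => cases h
  | cons i I ih =>
    rw [List.flatMap_cons, inst_append] at h
    rcases unionComponent_of_prefix_frame hσ h with h_off | hu
    · rw [h_off, List.nil_append] at h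
      exact ih h
    · exact ⟨i, hu⟩

end Components

variable {n : ℕ} {ps : Fin n → WordPattern Γ V} {L : V → List Γ} {e : RegularExpression Bin}

theorem nil_mem_unionRE {ι : Type} (he : [] ∈ e.matches') (y : UnionVar ι V) :
    [] ∈ (unionRE L e y).matches' := by
  cases y with
  | lead => exact he
  | bit i b => exact mem_one_add_char.2 (.inl rfl)
  | data i x => exact mem_codesRE.2 ⟨[], nil_mem_wordsOver, rfl⟩

theorem inst_unionPattern (σ : UnionVar (Fin n) V → List Bin) :
    inst σ (unionPattern ps) =
      σ .lead ++ (List.finRange n).flatMap fun i => inst σ (unionComponent i (ps i)) := by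
  rw [unionPattern, inst_inr_cons, inst_flatMap]

theorem mem_unionPattern_of_lead {v : List Bin} (hv : v ∈ e.matches') :
    v ∈ patternLanguage (fun y => (unionRE L e y).matches') (unionPattern ps) := by
  refine ⟨fun | .lead => v | _ => [], ?_, ?_⟩
  · rintro (_ | ⟨i, b⟩ | ⟨i, x⟩)
    exacts [hv, mem_one_add_char.2 (.inl rfl), mem_codesRE.2 ⟨[], nil_mem_wordsOver, rfl⟩]
  · simp [inst_unionPattern, inst_unionComponent]

theorem frame_mem_unionPattern {u : List Γ} {i : Fin n} (he : [] ∈ e.matches')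
    (hu : u ∈ patternLanguage (fun x => wordsOver {a | a ∈ L x}) (ps i)) :
    frame u ∈ patternLanguage (fun y => (unionRE L e y).matches') (unionPattern ps) := by
  obtain ⟨τ, hτ, rfl⟩ := hu
  refine ⟨fun | .lead => [] | .bit j b => if j = i then [b] else []
              | .data j x => if j = i then encodeWord (τ x) else [], ?_, ?_⟩
  · rintro (_ | ⟨j, b⟩ | ⟨j, x⟩)
    · exact he
    · by_cases hj : j = i
      · simpa [unionRE, hj] using mem_one_add_char.2 (.inr rfl)
      · simpa [unionRE, hj] using mem_one_add_char.2 (.inl rfl)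
    · by_cases hj : j = i
      · simpa [unionRE, hj] using mem_codesRE.2 ⟨τ x, hτ x, rfl⟩
      · simpa [unionRE, hj] using mem_codesRE.2 ⟨[], nil_mem_wordsOver, rfl⟩
  · rw [inst_unionPattern, List.nil_append,
      flatMap_eq_of_eq_nil (List.nodup_finRange n) (List.mem_finRange i)]
    · exact inst_unionComponent_on (by simp) (by simp)
    · intro j hj
      simp [inst_unionComponent, hj]

theorem unionPattern_decoy_eq_iff {A : List Γ} {G : RegularExpression Bin} {W : Set (List Γ)}
    (hW : W ⊆ wordsOver {a | a ∈ A}) (hG : ∀ v, v ∈ G.matches' ↔ v ∈ frame '' W) :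
    patternLanguage (fun y => (unionRE L (decoyRE A + G) y).matches') (unionPattern ps) =
        patternLanguage (fun y => (unionRE L (decoyRE A) y).matches') (unionPattern ps) ↔
      ∀ u ∈ W, ∃ i, u ∈ patternLanguage (fun x => wordsOver {a | a ∈ L x}) (ps i) := by
  have hnil : [] ∈ (decoyRE A).matches' := mem_decoyRE.2 (.inl rfl)
  constructor
  · intro h u hu
    have hmem : frame u ∈
        patternLanguage (fun y => (unionRE L (decoyRE A + G) y).matches') (unionPattern ps) :=
      mem_unionPattern_of_lead (.inr ((hG _).2 ⟨u, hu, rfl⟩))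
    rw [h] at hmem
    obtain ⟨σ, hσ, hframe⟩ := hmem
    rw [inst_unionPattern] at hframe
    rcases mem_decoyRE.1 (hσ .lead) with hlead | ⟨v, -, r, hr, hlead⟩
    · rw [hlead, List.nil_append, ← inst_flatMap] at hframe
      exact exists_component_of_flatMap_eq_frame hσ hframe
    · rw [← hlead, List.append_assoc, ← List.append_nil (frame u)] at hframe
      exact absurd (List.append_eq_nil_iff.1 (frame_append_inj hframe).2).1 hr
  · intro h
    ext v
    constructor
    · rintro ⟨σ, hσ, rfl⟩
      rw [inst_unionPattern]
      rcases hσ .lead with hlead | hlead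
      · refine ⟨σ, ?_, inst_unionPattern σ⟩
        rintro (_ | ⟨i, b⟩ | ⟨i, x⟩)
        exacts [hlead, hσ (.bit i b), hσ (.data i x)]
      · obtain ⟨u, hu, hlead⟩ := (hG _).1 hlead
        rw [← hlead]
        by_cases hr : ((List.finRange n).flatMap fun i => inst σ (unionComponent i (ps i))) = []
        · obtain ⟨i, hi⟩ := h u hu
          rw [hr, List.append_nil]
          exact frame_mem_unionPattern hnil hi
        · exact mem_unionPattern_of_lead (mem_decoyRE.2 (.inr ⟨u, hW hu, _, hr, rfl⟩))
    · rintro ⟨σ, hσ, rfl⟩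
      refine ⟨σ, ?_, rfl⟩
      rintro (_ | ⟨i, b⟩ | ⟨i, x⟩)
      exacts [.inl (hσ .lead), hσ (.bit i b), hσ (.data i x)]

end Union

section Mismatch

variable {Γ V : Type}

/-- Two words that disagree at some position that both of them have. -/
inductive Mismatch : List Γ → List Γ → Prop
  | head {a b : Γ} (h : a ≠ b) (s t : List Γ) : Mismatch (a :: s) (b :: t)
  | cons (a : Γ) {s t : List Γ} (h : Mismatch s t) : Mismatch (a :: s) (a :: t)

theorem Mismatch.append_left {s t : List Γ} (h : Mismatch s t) (w : List Γ) :
    Mismatch (w ++ s) (w ++ t) := by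
  induction w with
  | nil => exact h
  | cons a w ih => exact ih.cons a

theorem not_mismatch_append_right (s r : List Γ) : ¬ Mismatch s (s ++ r) := by
  induction s with
  | nil => nofun
  | cons a s ih =>
    intro h
    cases h with
    | head h => exact h rfl
    | cons _ h => exact ih h

theorem Mismatch.exists_eq {s t : List Γ} (h : Mismatch s t) :
    ∃ w a b s' t', a ≠ b ∧ s = w ++ a :: s' ∧ t = w ++ b :: t' := by
  induction h with
  | @head a b h s t => exact ⟨[], a, b, s, t, h, rfl, rfl⟩
  | cons a _ ih =>
    obtain ⟨w, b, c, s', t', hne, rfl, rfl⟩ := ih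
    exact ⟨a :: w, b, c, s', t', hne, rfl, rfl⟩

theorem prefix_or_prefix_or_mismatch (s t : List Γ) : s <+: t ∨ t <+: s ∨ Mismatch s t := by
  induction s generalizing t with
  | nil => exact .inl List.nil_prefix
  | cons a s ih =>
    cases t with
    | nil => exact .inr (.inl List.nil_prefix)
    | cons b t =>
      obtain rfl | hab := eq_or_ne a b
      · simpa using (ih t).imp id (.imp id (.cons a))
      · exact .inr (.inr (.head hab s t))

theorem Mismatch.of_append {s t u : List Γ} (h : Mismatch (s ++ t) u) :
    Mismatch s u ∨ ∃ r, u = s ++ r ∧ Mismatch t r := by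
  induction s generalizing u with
  | nil => exact .inr ⟨u, rfl, h⟩
  | cons a s ih =>
    cases h with
    | head hne _ t => exact .inl (.head hne s t)
    | cons _ h =>
      obtain hs | ⟨r, rfl, ht⟩ := ih h
      exacts [.inl (hs.cons a), .inr ⟨r, rfl, ht⟩]

/-- The variables of the patterns that describe a mismatch: a variable `x` is split into the parts
`fst x` and `snd x`, and `past` and `tail` stand for the unrelated beginning and end of the word. -/
inductive ErrVar (V : Type) where
  | past
  | tail
  | fst (x : V)
  | snd (x : V)
  deriving Encodable

/-- The letters that may occur in the values of the variables of a mismatch pattern. -/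
def errLetters (A : List Γ) (L : V → List Γ) : ErrVar V → List Γ
  | .past | .tail => A
  | .fst x | .snd x => L x

/-- The instances of `expand θ p` and `q` next to each other, between arbitrary words. -/
def embed (θ : V → WordPattern Γ (ErrVar V)) (p : WordPattern Γ V)
    (q : WordPattern Γ (ErrVar V)) : WordPattern Γ (ErrVar V) :=
  .inr .past :: (expand θ p ++ q ++ [.inr .tail])

theorem inst_embed (τ : ErrVar V → List Γ) (θ : V → WordPattern Γ (ErrVar V))
    (p : WordPattern Γ V) (q : WordPattern Γ (ErrVar V)) :
    inst τ (embed θ p q) =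
      τ .past ++ (inst (fun x => inst τ (θ x)) p ++ (inst τ q ++ τ .tail)) := by
  simp [embed, inst_expand]

/-- Matches an instance of `p` followed by the letter `b`. -/
def letterMismatch (p : WordPattern Γ V) (b : Γ) : WordPattern Γ (ErrVar V) :=
  embed (fun y => [.inr (.fst y)]) p [.inl b]

variable {A : List Γ} {L : V → List Γ} {u : List Γ}

theorem mem_letterMismatch {p : WordPattern Γ V} {b : Γ} (hu : u ∈ wordsOver {a | a ∈ A}) :
    u ∈ patternLanguage (fun y => wordsOver {a | a ∈ errLetters A L y}) (letterMismatch p b) ↔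
      ∃ P σ t, (∀ x, σ x ∈ wordsOver {a | a ∈ L x}) ∧ u = P ++ (inst σ p ++ b :: t) := by
  constructor
  · rintro ⟨τ, hτ, rfl⟩
    refine ⟨τ .past, fun x => τ (.fst x), τ .tail, fun x => hτ (.fst x), ?_⟩
    simp [letterMismatch, inst_embed]
  · rintro ⟨P, σ, t, hσ, rfl⟩
    simp only [append_mem_wordsOver, cons_mem_wordsOver] at hu
    refine ⟨fun | .past => P | .tail => t | .fst x => σ x | .snd _ => [], ?_,
      by simp [letterMismatch, inst_embed]⟩
    rintro (_ | _ | x | x)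
    exacts [hu.1, hu.2.2.2, hσ x, nil_mem_wordsOver]

variable [DecidableEq V]

/-- Matches an instance of `p` in which the value of `x` has a letter `a`, followed by the part of
that value before `a` and the letter `b`. -/
def varMismatch (p : WordPattern Γ V) (x : V) (a b : Γ) : WordPattern Γ (ErrVar V) :=
  embed (fun y => if y = x then [.inr (.fst y), .inl a, .inr (.snd y)] else [.inr (.fst y)]) p
    [.inr (.fst x), .inl b]

theorem mem_varMismatch {p : WordPattern Γ V} {x : V} {a b : Γ} (ha : a ∈ L x)
    (hu : u ∈ wordsOver {a | a ∈ A}) :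
    u ∈ patternLanguage (fun y => wordsOver {a | a ∈ errLetters A L y}) (varMismatch p x a b) ↔
      ∃ P σ w s t, (∀ x, σ x ∈ wordsOver {a | a ∈ L x}) ∧ σ x = w ++ a :: s ∧
        u = P ++ (inst σ p ++ (w ++ b :: t)) := by
  constructor
  · rintro ⟨τ, hτ, rfl⟩
    refine ⟨τ .past, fun y => if y = x then τ (.fst y) ++ a :: τ (.snd y) else τ (.fst y),
      τ (.fst x), τ (.snd x), τ .tail, fun y => ?_, if_pos rfl, ?_⟩
    · have hfst := hτ (.fst y)
      have hsnd := hτ (.snd y)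
      dsimp only
      split_ifs with hy
      · subst hy
        exact append_mem_wordsOver.2 ⟨hfst, cons_mem_wordsOver.2 ⟨ha, hsnd⟩⟩
      · exact hfst
    · simp only [varMismatch, inst_embed, apply_ite (inst τ)]
      simp
  · rintro ⟨P, σ, w, s, t, hσ, hx, rfl⟩
    simp only [append_mem_wordsOver, cons_mem_wordsOver] at hu
    have hσx := hσ x
    rw [hx, append_mem_wordsOver, cons_mem_wordsOver] at hσx
    refine ⟨fun | .past => P | .tail => t | .fst y => if y = x then w else σ y
                | .snd y => if y = x then s else [], ?_, ?_⟩
    · rintro (_ | _ | y | y)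
      · exact hu.1
      · exact hu.2.2.2.2
      · by_cases hy : y = x
        · simpa [errLetters, hy] using hσx.1
        · simpa [errLetters, hy] using hσ y
      · by_cases hy : y = x
        · simpa [errLetters, hy] using hσx.2.2
        · simp [hy]
    · simp only [varMismatch, inst_embed, apply_ite (inst _)]
      rw [inst_congr (τ := σ) fun y _ => by by_cases hy : y = x <;> simp [hy, hx]]
      simp

variable [DecidableEq Γ]

/-- The patterns matching the words in which an instance of `p` is followed by a word that has a
mismatch with the corresponding instance of `q`: one pattern for every place and every pair of
letters at which the first disagreement may happen. -/
def mismatchPatterns (A : List Γ) (L : V → List Γ) (p : WordPattern Γ V) :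
    WordPattern Γ V → List (WordPattern Γ (ErrVar V))
  | [] => []
  | .inl a :: q =>
    (A.filter (a ≠ ·)).map (letterMismatch p) ++ mismatchPatterns A L (p ++ [.inl a]) q
  | .inr x :: q =>
    ((L x).flatMap fun a => (A.filter (a ≠ ·)).map (varMismatch p x a)) ++
      mismatchPatterns A L (p ++ [.inr x]) q

theorem exists_mem_mismatchPatterns_iff {p q : WordPattern Γ V} (hu : u ∈ wordsOver {a | a ∈ A}) :
    (∃ r ∈ mismatchPatterns A L p q,
        u ∈ patternLanguage (fun y => wordsOver {a | a ∈ errLetters A L y}) r) ↔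
      ∃ P σ E, (∀ x, σ x ∈ wordsOver {a | a ∈ L x}) ∧ u = P ++ (inst σ p ++ E) ∧
        Mismatch (inst σ q) E := by
  induction q generalizing p with
  | nil => exact ⟨by rintro ⟨r, ⟨⟩, -⟩, by rintro ⟨P, σ, E, -, -, ⟨⟩⟩⟩
  | cons c q ih =>
    obtain a | x := c
    · simp only [mismatchPatterns, List.mem_append, or_and_right, exists_or, ih, List.mem_map,
        List.mem_filter, decide_eq_true_eq]
      constructor
      · rintro (⟨_, ⟨b, ⟨-, hab⟩, rfl⟩, hr⟩ | ⟨P, σ, E, hσ, rfl, hE⟩)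
        · obtain ⟨P, σ, t, hσ, rfl⟩ := (mem_letterMismatch hu).1 hr
          exact ⟨P, σ, _, hσ, rfl, .head hab _ _⟩
        · exact ⟨P, σ, a :: E, hσ, by simp, hE.cons a⟩
      · rintro ⟨P, σ, E, hσ, rfl, hE⟩
        cases hE with
        | @head _ b hab _ t =>
          refine .inl ⟨_, ⟨b, ⟨hu b (by simp), hab⟩, rfl⟩, ?_⟩
          exact (mem_letterMismatch hu).2 ⟨P, σ, t, hσ, rfl⟩
        | @cons _ _ t hE => exact .inr ⟨P, σ, t, hσ, by simp, hE⟩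
    · simp only [mismatchPatterns, List.mem_append, or_and_right, exists_or, ih, List.mem_map,
        List.mem_filter, decide_eq_true_eq, List.mem_flatMap]
      constructor
      · rintro (⟨_, ⟨a, ha, b, ⟨-, hab⟩, rfl⟩, hr⟩ | ⟨P, σ, E, hσ, rfl, hE⟩)
        · obtain ⟨P, σ, w, s, t, hσ, hx, rfl⟩ := (mem_varMismatch ha hu).1 hr
          refine ⟨P, σ, _, hσ, rfl, ?_⟩
          simpa [hx] using (Mismatch.head hab _ _).append_left w
        · exact ⟨P, σ, σ x ++ E, hσ, by simp, hE.append_left (σ x)⟩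
      · rintro ⟨P, σ, E, hσ, rfl, hE⟩
        obtain hmis | ⟨t, rfl, hq⟩ := Mismatch.of_append (s := σ x) hE
        · obtain ⟨w, a, b, s, t, hab, hx, rfl⟩ := hmis.exists_eq
          have ha : a ∈ L x := hσ x a (by simp [hx])
          refine .inl ⟨_, ⟨a, ha, b, ⟨hu b (by simp), hab⟩, rfl⟩, ?_⟩
          exact (mem_varMismatch ha hu).2 ⟨P, σ, w, s, t, hσ, hx, rfl⟩
        · exact .inr ⟨P, σ, t, hσ, by simp, hq⟩

end Mismatch

section Histories

variable {Γ : Type} {R : List Γ → List Γ → Prop} {sep halt : Γ}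

/-- The word `u` contains a configuration `c` between two separators such that what follows differs
from the successor of `c`. -/
def HasError (R : List Γ → List Γ → Prop) (sep : Γ) (u : List Γ) : Prop :=
  ∃ P c c' E, R c c' ∧ u = P ++ (sep :: (c ++ [sep]) ++ E) ∧ Mismatch (c' ++ [sep]) E

/-- The words that, after the configuration `w`, may be histories of computations ending
with `[halt]`. -/
def candidates (S : Set Γ) (sep halt : Γ) (w : List Γ) : Set (List Γ) :=
  {u | ∃ E ∈ wordsOver S, u = sep :: (w ++ sep :: (E ++ [halt, sep]))}

/-- The words listing the configurations after the first one in a computation that ends with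
`[halt]`, each followed by a separator. -/
inductive IsHistory (R : List Γ → List Γ → Prop) (sep halt : Γ) : List Γ → List Γ → Prop
  | nil : IsHistory R sep halt [halt] []
  | cons {c c' E : List Γ} (hR : R c c') (h : IsHistory R sep halt c' E) :
      IsHistory R sep halt c (c' ++ sep :: E)

/-- A deterministic relation on words without the letter `sep` in which words that contain `halt`
have no successor. -/
structure IsHistoryRel (R : List Γ → List Γ → Prop) (sep halt : Γ) : Prop where
  rightUnique : Relator.RightUnique R
  sep_notMem_left {c c' : List Γ} (h : R c c') : sep ∉ c
  sep_notMem_right {c c' : List Γ} (h : R c c') : sep ∉ c'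
  halt_notMem {c c' : List Γ} (h : R c c') : halt ∉ c
  sep_ne_halt : sep ≠ halt

theorem eq_or_exists_of_sep_cons_eq {a : Γ} {c d E F P : List Γ} (hc : a ∉ c) (hd : a ∉ d)
    (h : a :: (c ++ a :: E) = P ++ a :: (d ++ a :: F)) :
    c = d ∧ E = F ∨ ∃ Q, a :: E = Q ++ a :: (d ++ a :: F) := by
  cases P with
  | nil =>
    obtain ⟨hcd, -, hEF⟩ := append_cons_inj_of_notMem_left hd hc (List.cons.inj h).2
    exact .inl ⟨hcd, hEF⟩
  | cons b P =>
    obtain ⟨-, h⟩ := List.cons.inj h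
    obtain ⟨Q, -, hQ⟩ | ⟨Q, rfl, hQ⟩ := List.append_eq_append_iff.1 h
    · exact .inr ⟨Q, hQ⟩
    · cases Q with
      | nil => exact .inr ⟨[], hQ.symm⟩
      | cons b Q =>
        obtain ⟨rfl, -⟩ := List.cons.inj hQ
        simp at hc

theorem suffix_of_suffix_append_sep {c F : List Γ} (hne : sep ≠ halt) (hc : halt ∉ c)
    (h : [halt, sep] <:+ c ++ sep :: F) : [halt, sep] <:+ F := by
  obtain hle | hle := List.suffix_or_suffix_of_suffix h (List.suffix_append c (sep :: F))
  · exact (List.suffix_cons_iff.1 hle).resolve_left fun heq => hne (List.cons.inj heq).1.symm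
  · obtain heq | hle := List.suffix_cons_iff.1 hle
    · exact absurd (List.cons.inj heq).1 hne
    · obtain heq | hle := List.suffix_cons_iff.1 hle
      · obtain rfl : F = [] := (List.cons.inj heq).2
        obtain ⟨T, hT⟩ := h
        have hTc : T ++ [halt] = c := by
          apply List.append_cancel_right (bs := [sep])
          simpa using hT
        exact absurd (hTc ▸ by simp) hc
      · simp at hle

namespace IsHistory

theorem not_hasError (hR : IsHistoryRel R sep halt) {c E : List Γ} (h : IsHistory R sep halt c E) :
    ¬ HasError R sep (sep :: (c ++ sep :: E)) := by
  induction h with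
  | nil =>
    rintro ⟨P, d, d', F, hd, hu, -⟩
    simp only [List.cons_append, List.append_assoc, List.nil_append] at hu
    obtain ⟨rfl, -⟩ | ⟨Q, hQ⟩ := eq_or_exists_of_sep_cons_eq (c := [halt])
      (by simpa using hR.sep_ne_halt) (hR.sep_notMem_left hd) hu
    · exact hR.halt_notMem hd (List.mem_singleton_self _)
    · have hlen := congrArg List.length hQ
      simp only [List.length_append, List.length_cons, List.length_nil] at hlen
      omega
  | @cons c c' E hc _ ih =>
    rintro ⟨P, d, d', F, hd, hu, hF⟩
    simp only [List.cons_append, List.append_assoc, List.nil_append] at hu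
    obtain ⟨rfl, rfl⟩ | ⟨Q, hQ⟩ := eq_or_exists_of_sep_cons_eq
      (hR.sep_notMem_left hc) (hR.sep_notMem_left hd) hu
    · obtain rfl := hR.rightUnique hc hd
      refine not_mismatch_append_right (c' ++ [sep]) E ?_
      simpa using hF
    · exact ih ⟨Q, d, d', F, hd, by simpa using hQ, hF⟩

theorem exists_of_reaches {c : List Γ} (h : Relation.ReflTransGen R c [halt]) :
    ∃ E, IsHistory R sep halt c E := by
  induction h using Relation.ReflTransGen.head_induction_on with
  | refl => exact ⟨[], .nil⟩
  | head hc _ ih =>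
    obtain ⟨E, hE⟩ := ih
    exact ⟨_, .cons hc hE⟩

theorem suffix {c E : List Γ} (h : IsHistory R sep halt c E) : [halt, sep] <:+ c ++ sep :: E := by
  induction h with
  | nil => exact List.suffix_rfl
  | @cons c _ _ _ _ ih => exact ih.trans ((List.suffix_cons _ _).trans (List.suffix_append c _))

theorem mem_wordsOver {S : Set Γ} {c E : List Γ}
    (hS : ∀ {c c'}, R c c' → c ∈ wordsOver S → c' ∈ wordsOver S) (hsep : sep ∈ S)
    (h : IsHistory R sep halt c E) (hc : c ∈ wordsOver S) : E ∈ wordsOver S := by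
  induction h with
  | nil => exact nil_mem_wordsOver
  | cons hR _ ih =>
    have hc' := hS hR hc
    exact append_mem_wordsOver.2 ⟨hc', cons_mem_wordsOver.2 ⟨hsep, ih hc'⟩⟩

end IsHistory

/-- Reading the word configuration by configuration: without an error, the configuration after `c`
is the successor of `c`, unless `c = [halt]`. -/
theorem reaches_of_not_hasError (hR : IsHistoryRel R sep halt) {P c F : List Γ}
    (hprogress : ∀ c', Relation.ReflTransGen R c c' → c' = [halt] ∨ ∃ c'', R c' c'')
    (hsuff : [halt, sep] <:+ c ++ sep :: F)
    (herr : ¬ HasError R sep (P ++ sep :: (c ++ sep :: F))) :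
    Relation.ReflTransGen R c [halt] := by
  induction hn : F.length using Nat.strong_induction_on generalizing P c F with
  | _ n ih =>
    obtain rfl | ⟨c', hc'⟩ := hprogress c .refl
    · exact .refl
    have hF := suffix_of_suffix_append_sep hR.sep_ne_halt (hR.halt_notMem hc') hsuff
    have hsepF : sep ∈ F := hF.subset (by simp)
    obtain ⟨F', rfl⟩ : ∃ F', F = c' ++ sep :: F' := by
      obtain ⟨F', rfl⟩ | hpre | hmis := prefix_or_prefix_or_mismatch (c' ++ [sep]) F
      · exact ⟨F', by simp⟩
      · obtain rfl | hpre := List.prefix_concat_iff.1 hpre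
        · exact ⟨[], rfl⟩
        · exact absurd (hpre.subset hsepF) (hR.sep_notMem_right hc')
      · exact absurd ⟨P, c, c', F, hc', by simp, hmis⟩ herr
    refine .head hc' (ih F'.length (by simp [← hn]; omega) (P := P ++ sep :: c)
      (fun c'' h => hprogress c'' (.head hc' h)) hF (by simpa using herr) rfl)

theorem candidates_subset_wordsOver {S : Set Γ} (hsep : sep ∈ S) (hhalt : halt ∈ S) {w : List Γ}
    (hw : w ∈ wordsOver S) : candidates S sep halt w ⊆ wordsOver S := by
  rintro _ ⟨E, hE, rfl⟩
  change _ ∈ wordsOver S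
  simp [hsep, hhalt, hw, hE]

theorem exists_candidate_not_hasError_iff (hR : IsHistoryRel R sep halt) {S : Set Γ}
    (hS : ∀ {c c'}, R c c' → c ∈ wordsOver S → c' ∈ wordsOver S) (hsep : sep ∈ S) {w : List Γ}
    (hw : w ∈ wordsOver S) (hne : w ≠ [halt])
    (hprogress : ∀ c, Relation.ReflTransGen R w c → c = [halt] ∨ ∃ c', R c c') :
    (∃ u ∈ candidates S sep halt w, ¬ HasError R sep u) ↔ Relation.ReflTransGen R w [halt] := by
  constructor
  · rintro ⟨_, ⟨E, -, rfl⟩, herr⟩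
    refine reaches_of_not_hasError (P := []) (F := E ++ [halt, sep]) hR hprogress ?_ herr
    exact (List.suffix_append E _).trans ((List.suffix_cons _ _).trans (List.suffix_append w _))
  · intro h
    obtain ⟨F, hF⟩ := IsHistory.exists_of_reaches (sep := sep) h
    have hmem := hF.mem_wordsOver hS hsep hw
    have herr := hF.not_hasError hR
    cases hF with
    | nil => exact absurd rfl hne
    | cons _ hE =>
      obtain ⟨E, hE⟩ := hE.suffix
      rw [← hE] at hmem herr
      exact ⟨_, ⟨E, (append_mem_wordsOver.1 hmem).1, rfl⟩, herr⟩

end Histories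

section Rewriting

variable {Γ V : Type}

/-- Every variable of the pattern is followed by a letter that delimits it, that is, does not occur
in its values. -/
def Delimited (D : V → Set Γ) : WordPattern Γ V → Prop
  | [] => True
  | .inl _ :: p => Delimited D p
  | .inr x :: .inl a :: p => a ∉ D x ∧ Delimited D p
  | .inr _ :: _ => False

/-- A sufficient syntactic condition for two patterns to have no common instance. -/
def Apart (D : V → Set Γ) : WordPattern Γ V → WordPattern Γ V → Prop
  | .inl a :: p, .inl b :: q => a ≠ b ∨ Apart D p q
  | .inl a :: _, .inr x :: .inl b :: _ => a ∉ D x ∧ a ≠ b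
  | .inr x :: .inl a :: p, .inr y :: .inl b :: q => x = y ∧ a = b ∧ a ∉ D x ∧ Apart D p q
  | _, _ => False

section Instances

variable {D : V → Set Γ} {σ τ : V → List Γ}

theorem Delimited.eq_of_inst_eq {p : WordPattern Γ V} (hp : Delimited D p)
    (hσ : ∀ x, σ x ∈ wordsOver (D x)) (hτ : ∀ x, τ x ∈ wordsOver (D x))
    (h : inst σ p = inst τ p) {x : V} (hx : Sum.inr x ∈ p) : σ x = τ x := by
  fun_induction Delimited D p with
  | case1 => simp at hx
  | case2 a p ih => exact ih hp (List.cons.inj h).2 (by simpa using hx)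
  | case3 y a p ih =>
    obtain ⟨hy, -, h⟩ := append_cons_inj_of_notMem_left (fun ha => hp.1 (hτ y a ha))
      (fun ha => hp.1 (hσ y a ha)) h
    obtain rfl | hx : x = y ∨ Sum.inr x ∈ p := by simpa using hx
    exacts [hy, ih hp.2 h hx]
  | case4 => exact hp.elim

theorem Apart.inst_ne {p q : WordPattern Γ V} (hpq : Apart D p q)
    (hσ : ∀ x, σ x ∈ wordsOver (D x)) (hτ : ∀ x, τ x ∈ wordsOver (D x)) :
    inst σ p ≠ inst τ q := by
  intro h
  fun_induction Apart D p q with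
  | case1 a p b q ih =>
    obtain ⟨hab, h⟩ := List.cons.inj h
    exact ih (hpq.resolve_left (· hab)) h
  | case2 a p x b q =>
    rw [inst_inl_cons, inst_inr_cons, inst_inl_cons] at h
    cases hx : τ x with
    | nil =>
      rw [hx] at h
      exact hpq.2 (List.cons.inj h).1
    | cons c w =>
      rw [hx] at h
      obtain rfl : a = c := (List.cons.inj h).1
      exact hpq.1 (hτ x a (by simp [hx]))
  | case3 x a p y b q ih =>
    obtain ⟨rfl, rfl, ha, hpq⟩ := hpq
    obtain ⟨-, -, h⟩ := append_cons_inj_of_notMem_left (fun h => ha (hτ x a h))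
      (fun h => ha (hσ x a h)) h
    exact ih hpq h
  | case4 => exact hpq.elim

end Instances

/-- A rewriting rule for words with a fixed head letter: the rest of the word is an instance of
`lhs`, and the word is replaced by the corresponding instance of `rhs`. -/
structure Rule (Γ V : Type) where
  lhs : WordPattern Γ V
  rhs : WordPattern Γ V

/-- A system of rewriting rules, sorted by head letters, with the letters that may occur in the
values of the variables. -/
structure RewritingSystem (Γ V : Type) where
  rules : Γ → List (Rule Γ V)
  dom : V → Set Γ

namespace RewritingSystem

/-- One step of the rewriting system, which always acts on the whole word. -/
inductive Rewrites (S : RewritingSystem Γ V) : List Γ → List Γ → Prop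
  | intro {g : Γ} {r : Rule Γ V} {σ : V → List Γ} (hr : r ∈ S.rules g)
      (hσ : ∀ x, σ x ∈ wordsOver (S.dom x)) : Rewrites S (g :: inst σ r.lhs) (inst σ r.rhs)

/-- Syntactic conditions under which the steps of the system are deterministic, do not involve
`sep` and do not start from words containing `halt`. -/
structure IsWellFormed (S : RewritingSystem Γ V) (sep halt : Γ) : Prop where
  delimited {g : Γ} : ∀ r ∈ S.rules g, Delimited S.dom r.lhs
  apart (g : Γ) : (S.rules g).Pairwise fun r s => Apart S.dom r.lhs s.lhs
  vars_subset {g : Γ} : ∀ r ∈ S.rules g, ∀ x, Sum.inr x ∈ r.rhs → Sum.inr x ∈ r.lhs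
  rules_sep : S.rules sep = []
  rules_halt : S.rules halt = []
  sep_notMem_dom (x : V) : sep ∉ S.dom x
  halt_notMem_dom (x : V) : halt ∉ S.dom x
  sep_notMem_lhs {g : Γ} : ∀ r ∈ S.rules g, Sum.inl sep ∉ r.lhs
  sep_notMem_rhs {g : Γ} : ∀ r ∈ S.rules g, Sum.inl sep ∉ r.rhs
  halt_notMem_lhs {g : Γ} : ∀ r ∈ S.rules g, Sum.inl halt ∉ r.lhs
  sep_ne_halt : sep ≠ halt

variable {S : RewritingSystem Γ V} {sep halt : Γ} {A : List Γ}

theorem IsWellFormed.rightUnique (hS : S.IsWellFormed sep halt) :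
    Relator.RightUnique S.Rewrites := by
  rintro u v v' hv hv'
  obtain @⟨g, r, σ, hr, hσ⟩ := hv
  generalize hgu : g :: inst σ r.lhs = u at hv'
  obtain @⟨_, s, τ, hs, hτ⟩ := hv'
  obtain ⟨rfl, hu⟩ := List.cons.inj hgu
  by_cases hrs : r = s
  · subst hrs
    exact inst_congr fun x hx =>
      (hS.delimited r hr).eq_of_inst_eq hσ hτ hu (hS.vars_subset r hr x hx)
  · have happart : (S.rules g).Pairwise (Relation.SymmGen fun r s => Apart S.dom r.lhs s.lhs) :=
      (hS.apart g).imp .inl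
    obtain h | h := happart.forall hr hs hrs
    exacts [absurd hu (h.inst_ne hσ hτ), absurd hu.symm (h.inst_ne hτ hσ)]

theorem notMem_inst {p : WordPattern Γ V} {σ : V → List Γ} {a : Γ}
    (hσ : ∀ x, σ x ∈ wordsOver (S.dom x)) (hdom : ∀ x, a ∉ S.dom x) (hp : Sum.inl a ∉ p) :
    a ∉ inst σ p := by
  rw [mem_inst]
  rintro (ha | ⟨x, -, ha⟩)
  exacts [hp ha, hdom x (hσ x a ha)]

theorem IsWellFormed.isHistoryRel (hS : S.IsWellFormed sep halt) :
    IsHistoryRel S.Rewrites sep halt where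
  rightUnique := hS.rightUnique
  sep_ne_halt := hS.sep_ne_halt
  sep_notMem_left := by
    rintro _ _ @⟨g, r, σ, hr, hσ⟩
    refine List.not_mem_cons_of_ne_of_not_mem ?_
      (notMem_inst hσ hS.sep_notMem_dom (hS.sep_notMem_lhs r hr))
    rintro rfl
    simp [hS.rules_sep] at hr
  sep_notMem_right := by
    rintro _ _ @⟨g, r, σ, hr, hσ⟩
    exact notMem_inst hσ hS.sep_notMem_dom (hS.sep_notMem_rhs r hr)
  halt_notMem := by
    rintro _ _ @⟨g, r, σ, hr, hσ⟩
    refine List.not_mem_cons_of_ne_of_not_mem ?_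
      (notMem_inst hσ hS.halt_notMem_dom (hS.halt_notMem_lhs r hr))
    rintro rfl
    simp [hS.rules_halt] at hr

theorem Rewrites.mem_wordsOver (hS : S.IsWellFormed sep halt)
    (hA : ∀ g ∈ A, ∀ r ∈ S.rules g, ∀ a, Sum.inl a ∈ r.rhs → a ∈ A) {u v : List Γ}
    (h : S.Rewrites u v) (hu : u ∈ wordsOver {a | a ∈ A}) : v ∈ wordsOver {a | a ∈ A} := by
  obtain @⟨g, r, σ, hr, -⟩ := h
  rw [cons_mem_wordsOver] at hu
  intro a ha
  obtain ha | ⟨x, hx, ha⟩ := mem_inst.1 ha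
  · exact hA g hu.1 r hr a ha
  · exact hu.2 a (mem_inst.2 (.inr ⟨x, hS.vars_subset r hr x hx, ha⟩))

section ErrorPatterns

variable [DecidableEq Γ] [DecidableEq V]

open scoped Classical in
/-- The letters of `A` that may occur in the values of a variable. -/
noncomputable def letters (S : RewritingSystem Γ V) (A : List Γ) (x : V) : List Γ :=
  A.filter (· ∈ S.dom x)

/-- Patterns that match the words over `A` with an error. -/
noncomputable def errorPatterns (S : RewritingSystem Γ V) (A : List Γ) (sep : Γ) :
    List (WordPattern Γ (ErrVar V)) :=
  A.flatMap fun g => (S.rules g).flatMap fun r =>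
    mismatchPatterns A (S.letters A) (.inl sep :: .inl g :: r.lhs ++ [.inl sep])
      (r.rhs ++ [.inl sep])

theorem exists_mem_errorPatterns_iff (hS : S.IsWellFormed sep halt) {u : List Γ}
    (hu : u ∈ wordsOver {a | a ∈ A}) :
    (∃ p ∈ errorPatterns S A sep, u ∈ patternLanguage
        (fun y => wordsOver {a | a ∈ errLetters A (S.letters A) y}) p) ↔
      HasError S.Rewrites sep u := by
  classical
  have hmem (g : Γ) (r : Rule Γ V) := exists_mem_mismatchPatterns_iff (L := S.letters A)
    (p := .inl sep :: .inl g :: r.lhs ++ [.inl sep]) (q := r.rhs ++ [.inl sep]) hu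
  constructor
  · rintro ⟨p, hp, hup⟩
    simp only [errorPatterns, List.mem_flatMap] at hp
    obtain ⟨g, -, r, hr, hp⟩ := hp
    obtain ⟨P, σ, E, hσ, rfl, hE⟩ := (hmem g r).1 ⟨p, hp, hup⟩
    refine ⟨P, _, _, E, .intro (σ := σ) hr fun x a ha => ?_, by simp, by simpa using hE⟩
    simpa using (List.mem_filter.1 (hσ x a ha)).2
  · rintro ⟨P, _, _, E, @⟨g, r, σ, hr, hσ⟩, rfl, hE⟩
    have hlhs : g :: inst σ r.lhs ∈ wordsOver {a | a ∈ A} := by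
      simp only [append_mem_wordsOver, cons_mem_wordsOver] at hu ⊢
      tauto
    let τ : V → List Γ := fun x => if Sum.inr x ∈ r.lhs then σ x else []
    have hτ (x : V) : τ x ∈ wordsOver {a | a ∈ S.letters A x} := by
      by_cases hx : Sum.inr x ∈ r.lhs
      · have hτx : τ x = σ x := if_pos hx
        intro a ha
        rw [hτx] at ha
        have haA : a ∈ A := hlhs a (List.mem_cons_of_mem g (mem_inst.2 (.inr ⟨x, hx, ha⟩)))
        exact List.mem_filter.2 ⟨haA, by simpa using hσ x a ha⟩
      · simp [τ, hx]
    have heq (p : WordPattern Γ V) (hp : ∀ x, Sum.inr x ∈ p → Sum.inr x ∈ r.lhs) :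
        inst τ p = inst σ p := inst_congr fun x hx => if_pos (hp x hx)
    have hlhs_eq := heq r.lhs fun _ => id
    have hrhs_eq := heq r.rhs (hS.vars_subset r hr)
    obtain ⟨p, hp, hup⟩ := (hmem g r).2
      ⟨P, τ, E, hτ, by simp [hlhs_eq], by simpa [hrhs_eq] using hE⟩
    exact ⟨p, List.mem_flatMap.2 ⟨g, hlhs g (by simp), List.mem_flatMap.2 ⟨r, hr, hp⟩⟩, hup⟩

end ErrorPatterns

end RewritingSystem

end Rewriting

section Simulation

open Relation StateTransition

variable {σ α : Type} {f : σ → Option σ} {R : α → α → Prop} {enc : σ → α} {final : α}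

/-- A deterministic relation `R` simulates the transition function `f`, all halting states being
represented by `final`. -/
structure IsSimulation (f : σ → Option σ) (R : α → α → Prop) (enc : σ → α) (final : α) : Prop where
  rightUnique : Relator.RightUnique R
  transGen {c c' : σ} (h : c' ∈ f c) : TransGen R (enc c) (enc c')
  enc_eq_final {c : σ} (h : f c = none) : enc c = final
  final_irreducible (b : α) : ¬ R final b

open scoped Classical in
/-- A deterministic relation as a partial function. -/
noncomputable def stepFn (R : α → α → Prop) (a : α) : Option α :=
  if h : ∃ b, R a b then some h.choose else none

theorem mem_stepFn (hR : Relator.RightUnique R) {a b : α} : b ∈ stepFn R a ↔ R a b := by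
  rw [stepFn]
  split_ifs with h
  · rw [Option.mem_some_iff]
    exact ⟨fun hb => hb ▸ h.choose_spec, fun hb => hR h.choose_spec hb⟩
  · exact ⟨nofun, fun hb => absurd ⟨b, hb⟩ h⟩

theorem stepFn_eq_none {a : α} : stepFn R a = none ↔ ∀ b, ¬ R a b := by
  simp [stepFn]

namespace IsSimulation

theorem mem_stepFn_eq (h : IsSimulation f R enc final) : (fun a b => b ∈ stepFn R a) = R := by
  funext a b
  exact propext (mem_stepFn h.rightUnique)

theorem respects (h : IsSimulation f R enc final) :
    Respects f (stepFn R) fun c b => enc c = b := by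
  rintro c _ rfl
  cases hc : f c with
  | none => exact stepFn_eq_none.2 (h.enc_eq_final hc ▸ h.final_irreducible)
  | some c' =>
    refine ⟨_, rfl, ?_⟩
    rw [Reaches₁, h.mem_stepFn_eq]
    exact h.transGen hc

theorem eq_final_or_exists (h : IsSimulation f R enc final) {c : σ} {b : α}
    (hb : ReflTransGen R (enc c) b) : b = final ∨ ∃ b', R b b' := by
  obtain ⟨c', _, hbc, rfl, -⟩ := tr_reaches_rev h.respects (a₁ := c) rfl
    (b₂ := b) (by rwa [Reaches, h.mem_stepFn_eq])
  rw [Reaches, h.mem_stepFn_eq] at hbc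
  obtain rfl | ⟨b', hb', -⟩ := hbc.cases_head
  · cases hc : f c' with
    | none => exact .inl (h.enc_eq_final hc)
    | some c'' =>
      obtain ⟨b', hb', -⟩ := TransGen.head'_iff.1 (h.transGen hc)
      exact .inr ⟨b', hb'⟩
  · exact .inr ⟨b', hb'⟩

theorem reaches_final_iff (h : IsSimulation f R enc final) (c : σ) :
    ReflTransGen R (enc c) final ↔ (eval f c).Dom := by
  rw [← tr_eval_dom h.respects (rfl : enc c = enc c), Part.dom_iff_mem]
  simp only [mem_eval, Reaches, h.mem_stepFn_eq, stepFn_eq_none]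
  constructor
  · exact fun hc => ⟨final, hc, h.final_irreducible⟩
  · rintro ⟨b, hb, hirr⟩
    obtain rfl | ⟨b', hb'⟩ := h.eq_final_or_exists hb
    exacts [hb, absurd hb' (hirr b')]

end IsSimulation

end Simulation

section Codes

open Turing Turing.ToPartrec

deriving instance Encodable for Turing.ToPartrec.Code

/-- The letters of the words that represent the configurations of `Turing.ToPartrec`. The letter
`one` is the unary digit, `comma` ends a number, `nil` ends a list, `value` separates the
continuation from the list passed to it, and `bottom` is the empty continuation. -/
inductive Letter
  | one | comma | nil | value | bottom | halted | sep | cons₂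
  | cons₁ (c : Code) | comp (c : Code) | fix (c : Code) | eval (c : Code)
  deriving DecidableEq, Encodable

/-- Variables for continuations, lists of numbers, and unary numbers. -/
inductive Var
  | cont | list | list' | num
  deriving DecidableEq, Encodable

instance : Coe Letter (Letter ⊕ Var) := ⟨.inl⟩

instance : Coe Var (Letter ⊕ Var) := ⟨.inr⟩

namespace Letter

open Var

/-- The rules that simulate `Turing.ToPartrec`: `eval c` stands for the evaluation of `c` on the
list that is passed to the continuation. -/
def rules : Letter → List (Rule Letter Var)
  | eval .zero' =>
    [⟨[cont, value, list, nil], [cont, value, comma, list, nil]⟩]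
  | eval .succ =>
    [⟨[cont, value, nil], [cont, value, one, comma, nil]⟩,
     ⟨[cont, value, num, comma, list, nil], [cont, value, one, num, comma, nil]⟩]
  | eval .tail =>
    [⟨[cont, value, nil], [cont, value, nil]⟩,
     ⟨[cont, value, num, comma, list, nil], [cont, value, list, nil]⟩]
  | eval (.cons f g) =>
    [⟨[cont, value, list, nil], [eval f, cons₁ g, list, nil, cont, value, list, nil]⟩]
  | eval (.comp f g) =>
    [⟨[cont, value, list, nil], [eval g, comp f, cont, value, list, nil]⟩]
  | eval (.case f g) =>
    [⟨[cont, value, nil], [eval f, cont, value, nil]⟩,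
     ⟨[cont, value, comma, list, nil], [eval f, cont, value, list, nil]⟩,
     ⟨[cont, value, one, list, nil], [eval g, cont, value, list, nil]⟩]
  | eval (.fix f) =>
    [⟨[cont, value, list, nil], [eval f, fix f, cont, value, list, nil]⟩]
  | bottom =>
    [⟨[value, list, nil], [halted]⟩]
  | cons₁ c =>
    [⟨[list, nil, cont, value, list', nil], [eval c, cons₂, list', nil, cont, value, list, nil]⟩]
  | cons₂ =>
    [⟨[nil, cont, value, list, nil], [cont, value, comma, list, nil]⟩,
     ⟨[num, comma, list', nil, cont, value, list, nil], [cont, value, num, comma, list, nil]⟩]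
  | comp c =>
    [⟨[cont, value, list, nil], [eval c, cont, value, list, nil]⟩]
  | fix c =>
    [⟨[cont, value, nil], [cont, value, nil]⟩,
     ⟨[cont, value, comma, list, nil], [cont, value, list, nil]⟩,
     ⟨[cont, value, one, num, comma, list, nil], [eval c, fix c, cont, value, list, nil]⟩]
  | one | comma | nil | value | halted | sep => []

end Letter

open Letter Var

/-- The letters that may occur in the values of each variable. -/
def Var.dom : Var → Set Letter
  | cont => {value, halted, sep}ᶜ
  | list | list' => {one, comma}
  | num => {one}

/-- The rewriting system that simulates `Turing.ToPartrec`. -/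
def codeSystem : RewritingSystem Letter Var where
  rules := rules
  dom := Var.dom

theorem codeSystem_isWellFormed : codeSystem.IsWellFormed sep halted where
  delimited {g} := by
    fun_cases rules g <;> simp [codeSystem, rules, Delimited, Var.dom]
  apart g := by
    fun_cases rules g <;> simp [codeSystem, rules, Apart, Var.dom]
  vars_subset {g} := by
    fun_cases rules g <;> simp [codeSystem, rules]
  rules_sep := rfl
  rules_halt := rfl
  sep_notMem_dom x := by cases x <;> simp [codeSystem, Var.dom]
  halt_notMem_dom x := by cases x <;> simp [codeSystem, Var.dom]
  sep_notMem_lhs {g} := by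
    fun_cases rules g <;> simp [codeSystem, rules]
  sep_notMem_rhs {g} := by
    fun_cases rules g <;> simp [codeSystem, rules]
  halt_notMem_lhs {g} := by
    fun_cases rules g <;> simp [codeSystem, rules]
  sep_ne_halt := nofun

/-- A code together with all codes that it is built from. -/
def subcodes : Code → List Code
  | .cons f g => .cons f g :: (subcodes f ++ subcodes g)
  | .comp f g => .comp f g :: (subcodes f ++ subcodes g)
  | .case f g => .case f g :: (subcodes f ++ subcodes g)
  | .fix f => .fix f :: subcodes f
  | c => [c]

@[simp]
theorem self_mem_subcodes (c : Code) : c ∈ subcodes c := by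
  cases c <;> simp [subcodes]

theorem subcodes_subset {c d : Code} (h : d ∈ subcodes c) : subcodes d ⊆ subcodes c := by
  induction c <;> grind [subcodes]

/-- The code that a letter carries. -/
def Letter.code? : Letter → Option Code
  | cons₁ c | comp c | fix c | eval c => some c
  | _ => none

/-- The letters needed to simulate a single code. -/
def alphabet (c : Code) : List Letter :=
  [one, comma, nil, value, bottom, halted, sep, cons₂] ++
    (subcodes c).flatMap fun d => [cons₁ d, comp d, fix d, eval d]

theorem mem_alphabet {c : Code} {a : Letter} :
    a ∈ alphabet c ↔ ∀ d ∈ a.code?, d ∈ subcodes c := by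
  cases a <;> simp [alphabet, code?]

theorem exists_mem_subcodes_of_mem_rhs {g : Letter} :
    ∀ r ∈ rules g, ∀ a, Sum.inl a ∈ r.rhs → ∀ d ∈ a.code?, ∃ f ∈ g.code?, d ∈ subcodes f := by
  fun_cases rules g <;> simp [code?, subcodes, or_imp, forall_and]

theorem mem_alphabet_of_mem_rhs {c : Code} :
    ∀ g ∈ alphabet c, ∀ r ∈ codeSystem.rules g, ∀ a, Sum.inl a ∈ r.rhs → a ∈ alphabet c := by
  intro g hg r hr a ha
  refine mem_alphabet.2 fun d hd => ?_
  obtain ⟨f, hf, hdf⟩ := exists_mem_subcodes_of_mem_rhs r hr a ha d hd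
  exact subcodes_subset (mem_alphabet.1 hg f hf) hdf

/-- A list of numbers in unary. -/
def encodeList : List ℕ → List Letter
  | [] => []
  | n :: v => List.replicate n one ++ comma :: encodeList v

/-- A continuation as a word. -/
def encodeCont : Cont → List Letter
  | .halt => [bottom]
  | .cons₁ c v k => cons₁ c :: (encodeList v ++ nil :: encodeCont k)
  | .cons₂ v k => cons₂ :: (encodeList v ++ nil :: encodeCont k)
  | .comp c k => comp c :: encodeCont k
  | .fix c k => fix c :: encodeCont k

/-- A configuration as a word; the result of a halting computation is forgotten. -/
def encodeCfg : Cfg → List Letter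
  | .halt _ => [halted]
  | .ret k v => encodeCont k ++ value :: (encodeList v ++ [nil])

/-- The values of the variables in a configuration. -/
def assign (k : Cont) (n : ℕ) (v w : List ℕ) : Var → List Letter
  | cont => encodeCont k
  | list => encodeList v
  | list' => encodeList w
  | num => List.replicate n one

theorem encodeList_mem_wordsOver (v : List ℕ) : encodeList v ∈ wordsOver {one, comma} := by
  induction v with
  | nil => simp [encodeList]
  | cons n v ih =>
    have hn : List.replicate n one ∈ wordsOver {one, comma} := fun a ha =>
      .inl (List.eq_of_mem_replicate ha)
    simp [encodeList, hn, ih]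

theorem encodeCont_mem_wordsOver (k : Cont) :
    encodeCont k ∈ wordsOver {value, halted, sep}ᶜ := by
  have hlist (v : List ℕ) : encodeList v ∈ wordsOver {value, halted, sep}ᶜ := fun a ha => by
    obtain rfl | rfl := encodeList_mem_wordsOver v a ha <;> simp
  induction k <;> simp_all [encodeCont]

theorem assign_mem_wordsOver (k : Cont) (n : ℕ) (v w : List ℕ) (x : Var) :
    assign k n v w x ∈ wordsOver (codeSystem.dom x) := by
  cases x with
  | cont => exact encodeCont_mem_wordsOver k
  | list => exact encodeList_mem_wordsOver v
  | list' => exact encodeList_mem_wordsOver w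
  | num => exact fun a ha => List.eq_of_mem_replicate ha

open Relation

theorem rewrites_of_mem (g : Letter) (k : Cont) (n : ℕ) (v w : List ℕ) {r : Rule Letter Var}
    (hr : r ∈ rules g) {a b : List Letter} (ha : a = g :: inst (assign k n v w) r.lhs := by rfl)
    (hb : b = inst (assign k n v w) r.rhs := by rfl) : codeSystem.Rewrites a b := by
  rw [ha, hb]
  exact .intro hr (assign_mem_wordsOver k n v w)

theorem transGen_stepNormal (c : Code) (k : Cont) (v : List ℕ) :
    TransGen codeSystem.Rewrites (eval c :: encodeCfg (.ret k v))
      (encodeCfg (stepNormal c k v)) := by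
  induction c generalizing k v with
  | zero' => exact .single (rewrites_of_mem (eval .zero') k 0 v [] (.head _))
  | succ =>
    rcases v with _ | ⟨n, v⟩
    · exact .single (rewrites_of_mem (eval .succ) k 0 [] [] (.head _))
    · exact .single (rewrites_of_mem (eval .succ) k n v [] (.tail _ (.head _))
        (by simp [encodeCfg, encodeList, assign])
        (by simp [encodeCfg, encodeList, assign, stepNormal, List.replicate_succ]))
  | tail =>
    rcases v with _ | ⟨n, v⟩
    · exact .single (rewrites_of_mem (eval .tail) k 0 [] [] (.head _))
    · exact .single (rewrites_of_mem (eval .tail) k n v [] (.tail _ (.head _))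
        (by simp [encodeCfg, encodeList, assign]))
  | cons f g ihf _ =>
    exact .head (rewrites_of_mem (eval (.cons f g)) k 0 v [] (.head _)
      (hb := by simp [encodeCfg, encodeCont, assign])) (ihf (.cons₁ g v k) v)
  | comp f g _ ihg =>
    exact .head (rewrites_of_mem (eval (.comp f g)) k 0 v [] (.head _)) (ihg (.comp f k) v)
  | case f g ihf ihg =>
    rcases v with _ | ⟨_ | n, v⟩
    · exact .head (rewrites_of_mem (eval (.case f g)) k 0 [] [] (.head _)) (ihf k [])
    · exact .head (rewrites_of_mem (eval (.case f g)) k 0 v [] (.tail _ (.head _))) (ihf k v)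
    · exact .head (rewrites_of_mem (eval (.case f g)) k 0 (n :: v) []
        (.tail _ (.tail _ (.head _)))) (ihg k (n :: v))
  | fix f ihf =>
    exact .head (rewrites_of_mem (eval (.fix f)) k 0 v [] (.head _)) (ihf (.fix f k) v)

theorem transGen_stepRet (k : Cont) (v : List ℕ) :
    TransGen codeSystem.Rewrites (encodeCfg (.ret k v)) (encodeCfg (stepRet k v)) := by
  induction k generalizing v with
  | halt => exact .single (rewrites_of_mem bottom .halt 0 v [] (.head _))
  | cons₁ c w k =>
    exact .head (rewrites_of_mem (cons₁ c) k 0 w v (.head _)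
      (by simp [encodeCfg, encodeCont, assign]) (by simp [encodeCfg, encodeCont, assign]))
      (transGen_stepNormal c (.cons₂ v k) w)
  | cons₂ w k ih =>
    rcases w with _ | ⟨n, w⟩
    · exact .head (rewrites_of_mem cons₂ k 0 v [] (.head _)) (ih (0 :: v))
    · exact .head (rewrites_of_mem cons₂ k n v w (.tail _ (.head _))
        (by simp [encodeCfg, encodeCont, encodeList, assign])
        (by simp [encodeCfg, encodeList, assign])) (ih (n :: v))
  | comp c k =>
    exact .head (rewrites_of_mem (comp c) k 0 v [] (.head _)) (transGen_stepNormal c k v)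
  | fix c k ih =>
    rcases v with _ | ⟨_ | n, v⟩
    · exact .head (rewrites_of_mem (fix c) k 0 [] [] (.head _)) (ih [])
    · exact .head (rewrites_of_mem (fix c) k 0 v [] (.tail _ (.head _))) (ih v)
    · exact .head (rewrites_of_mem (fix c) k n v [] (.tail _ (.tail _ (.head _)))
        (by simp [encodeCfg, encodeCont, encodeList, assign, List.replicate_succ]))
        (transGen_stepNormal c (.fix c k) v)

theorem isSimulation_codeSystem :
    IsSimulation ToPartrec.step codeSystem.Rewrites encodeCfg [halted] where
  rightUnique := codeSystem_isWellFormed.rightUnique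
  transGen {c c'} h := by
    cases c with
    | halt v => cases h
    | ret k v =>
      cases h
      exact transGen_stepRet k v
  enc_eq_final {c} h := by
    cases c with
    | halt v => rfl
    | ret k v => cases h
  final_irreducible b h := codeSystem_isWellFormed.isHistoryRel.halt_notMem h (by simp)

/-- The configuration in which the code `c` is about to be evaluated on `v`. -/
def initCfg (c : Code) (v : List ℕ) : Cfg := .ret (.comp c .halt) v

theorem reflTransGen_initCfg_iff (c : Code) (v : List ℕ) :
    ReflTransGen codeSystem.Rewrites (encodeCfg (initCfg c v)) [halted] ↔ (c.eval v).Dom := by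
  have hstep : StateTransition.Reaches ToPartrec.step (initCfg c v) (stepNormal c .halt v) :=
    .single rfl
  rw [isSimulation_codeSystem.reaches_final_iff, StateTransition.reaches_eval hstep,
    stepNormal_eval]
  rfl

theorem encodeCfg_initCfg_mem_wordsOver (c : Code) (v : List ℕ) :
    encodeCfg (initCfg c v) ∈ wordsOver {a | a ∈ alphabet c} := by
  have hlist : encodeList v ∈ wordsOver {a | a ∈ alphabet c} := fun a ha => by
    obtain rfl | rfl := encodeList_mem_wordsOver v a ha <;> simp [alphabet]
  simp only [encodeCfg, initCfg, encodeCont, append_mem_wordsOver, cons_mem_wordsOver,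
    nil_mem_wordsOver, hlist]
  simp [alphabet]

end Codes

section Reduction

variable {Γ V α : Type} [Encodable Γ] {A : List Γ} {sep halt : Γ}

/-- Matches the framed candidates for histories over `A` that start with `w`. -/
def historyRE (A : List Γ) (sep halt : Γ) (w : List Γ) : RegularExpression Bin :=
  wordRE ([true, false, true] ++ encodeWord (sep :: (w ++ [sep]))) * codesRE A *
    wordRE (encodeWord [halt, sep] ++ [true])

theorem mem_historyRE {w : List Γ} {v : List Bin} :
    v ∈ (historyRE A sep halt w).matches' ↔ v ∈ frame '' candidates {a | a ∈ A} sep halt w := by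
  have hframe (E : List Γ) : frame (sep :: (w ++ sep :: (E ++ [halt, sep]))) =
      [true, false, true] ++ encodeWord (sep :: (w ++ [sep])) ++ encodeWord E ++
        (encodeWord [halt, sep] ++ [true]) := by
    simp [frame, encodeWord_append]
  simp only [historyRE, RegularExpression.matches'_mul, Language.mem_mul, mem_wordRE, mem_codesRE]
  constructor
  · rintro ⟨_, ⟨_, rfl, _, ⟨E, hE, rfl⟩, rfl⟩, _, rfl, rfl⟩
    exact ⟨_, ⟨E, hE, rfl⟩, hframe E⟩
  · rintro ⟨_, ⟨E, hE, rfl⟩, rfl⟩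
    exact ⟨_, ⟨_, rfl, _, ⟨E, hE, rfl⟩, rfl⟩, _, rfl, (hframe E).symm⟩

/-- The pattern, with its constraints, that represents the union of the error patterns of `S`, where
`e` constrains the leading variable. -/
noncomputable def errorUnion [DecidableEq Γ] [DecidableEq V] [Encodable V]
    (S : RewritingSystem Γ V) (A : List Γ) (sep : Γ) (e : RegularExpression Bin) :
    Pattern × RegConstraint :=
  let p := unionPattern (S.errorPatterns A sep).get
  (toPattern p, toConstraint p (unionRE (errLetters A (S.letters A)) e))

theorem langE_errorUnion_eq_iff [DecidableEq Γ] [DecidableEq V] [Encodable V]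
    {S : RewritingSystem Γ V} (hS : S.IsWellFormed sep halt)
    (hA : ∀ g ∈ A, ∀ r ∈ S.rules g, ∀ a, Sum.inl a ∈ r.rhs → a ∈ A)
    (hsep : sep ∈ A) (hhalt : halt ∈ A) {w : List Γ} (hw : w ∈ wordsOver {a | a ∈ A})
    (hne : w ≠ [halt])
    (hprogress : ∀ c, Relation.ReflTransGen S.Rewrites w c → c = [halt] ∨ ∃ c', S.Rewrites c c') :
    LangE (errorUnion S A sep (decoyRE A + historyRE A sep halt w)).1
          (constraintOf (errorUnion S A sep (decoyRE A + historyRE A sep halt w)).2) =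
        LangE (errorUnion S A sep (decoyRE A)).1
          (constraintOf (errorUnion S A sep (decoyRE A)).2) ↔
      ¬ Relation.ReflTransGen S.Rewrites w [halt] := by
  have hW : candidates {a | a ∈ A} sep halt w ⊆ wordsOver {a | a ∈ A} :=
    candidates_subset_wordsOver (S := {a | a ∈ A}) hsep hhalt hw
  have hnil : [] ∈ (decoyRE A).matches' := mem_decoyRE.2 (.inl rfl)
  have hnil' : [] ∈ (decoyRE A + historyRE A sep halt w).matches' := Or.inl hnil
  have hlang (e : RegularExpression Bin) (he : [] ∈ e.matches') :
      LangE (errorUnion S A sep e).1 (constraintOf (errorUnion S A sep e).2) = patternLanguage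
        (fun y => (unionRE (errLetters A (S.letters A)) e y).matches')
        (unionPattern (S.errorPatterns A sep).get) := langE_toPattern _ _ (nil_mem_unionRE he)
  rw [hlang _ hnil', hlang _ hnil]
  refine (unionPattern_decoy_eq_iff hW fun _ => mem_historyRE).trans ?_
  rw [← exists_candidate_not_hasError_iff hS.isHistoryRel (fun h => h.mem_wordsOver hS hA) hsep hw
    hne hprogress]
  push Not
  refine forall₂_congr fun u hu => ?_
  rw [← RewritingSystem.exists_mem_errorPatterns_iff hS (hW hu), List.exists_mem_iff_get]

theorem computable_encodeInput [Encodable V] [Primcodable α] (p : WordPattern Bin V)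
    {e : α → V → RegularExpression Bin} (he : ∀ x, Computable fun a => encRE (e a x))
    (q : Pattern × RegConstraint) :
    Computable fun a => encodeInput ((toPattern p, toConstraint p (e a)), q) := by
  have hlist (l : List V) :
      Computable fun a => ((l.map fun x => (encode x, e a x)).map fun q => (q.1, encRE q.2)) := by
    induction l with
    | nil => exact .const _
    | cons x l ih => exact Computable.list_cons.comp ((Computable.const _).pair (he x)) ih
  exact Computable.encode.comp (((Computable.const _).pair (hlist _)).pair
    (.const (q.1, q.2.map fun q => (q.1, encRE q.2))))

theorem computable_encRE_add [Primcodable α] {e e' : α → RegularExpression Bin}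
    (he : Computable fun a => encRE (e a)) (he' : Computable fun a => encRE (e' a)) :
    Computable fun a => encRE (e a + e' a) :=
  Primrec₂.natPair.to_comp.comp (.const 3) (Primrec₂.natPair.to_comp.comp he he')

theorem computable_encRE_mul [Primcodable α] {e e' : α → RegularExpression Bin}
    (he : Computable fun a => encRE (e a)) (he' : Computable fun a => encRE (e' a)) :
    Computable fun a => encRE (e a * e' a) :=
  Primrec₂.natPair.to_comp.comp (.const 4) (Primrec₂.natPair.to_comp.comp he he')

theorem primrec_encRE_wordRE : Primrec fun w => encRE (wordRE w) := by
  have hchar : Primrec fun b => encRE (.char b) := .dom_finite _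
  have hstep : Primrec₂ fun (_ : List Bin) (x : Bin × ℕ) =>
      Nat.pair 4 (Nat.pair (encRE (.char x.1)) x.2) :=
    Primrec₂.natPair.comp (.const 4)
      (Primrec₂.natPair.comp (hchar.comp (Primrec.fst.comp .snd)) (Primrec.snd.comp .snd))
  refine (Primrec.list_foldr .id (.const (encRE 1)) hstep).of_eq fun w => ?_
  induction w with
  | nil => rfl
  | cons b w ih => exact congrArg (fun k => Nat.pair 4 (Nat.pair (encRE (.char b)) k)) ih

theorem computable_encRE_historyRE [Primcodable α] {w : α → List Γ}
    (hw : Computable fun a => encodeWord (w a)) :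
    Computable fun a => encRE (historyRE A sep halt (w a)) := by
  have hword : Computable fun a =>
      [true, false, true] ++ (letterCode sep ++ (encodeWord (w a) ++ encodeWord [sep])) :=
    Computable.list_append.comp (.const _) (Computable.list_append.comp (.const _)
      (Computable.list_append.comp hw (.const _)))
  refine computable_encRE_mul (computable_encRE_mul ?_ (.const _)) (.const _)
  exact (primrec_encRE_wordRE.to_comp.comp hword).of_eq fun a => by simp [encodeWord_append]

theorem computable_encodeInput_errorUnion [DecidableEq Γ] [DecidableEq V] [Encodable V]
    [Primcodable α] (S : RewritingSystem Γ V) {e : α → RegularExpression Bin}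
    (he : Computable fun a => encRE (e a)) (q : Pattern × RegConstraint) :
    Computable fun a => encodeInput (errorUnion S A sep (e a), q) := by
  refine computable_encodeInput _ (fun y => ?_) q
  cases y with
  | lead => exact he
  | bit i b => exact .const _
  | data i x => exact .const _

theorem computable_encodeWord_replicate (a : Γ) :
    Computable fun n => encodeWord (List.replicate n a) := by
  have h : Primrec fun n : ℕ => (List.range n).flatMap fun _ => letterCode a :=
    .list_flatMap .list_range (Primrec.const _).to₂
  refine h.to_comp.of_eq fun n => ?_
  simp [encodeWord, List.flatMap_def]

end Reduction

section Halting

open Turing Turing.ToPartrec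

/-- The input to the equivalence problem whose languages agree if and only if `c` diverges on the
one-element list `[n]`. -/
noncomputable def haltingInput (c : Code) (n : ℕ) :
    (Pattern × RegConstraint) × (Pattern × RegConstraint) :=
  let e := historyRE (alphabet c) .sep .halted (encodeCfg (initCfg c [n]))
  (errorUnion codeSystem (alphabet c) .sep (decoyRE (alphabet c) + e),
    errorUnion codeSystem (alphabet c) .sep (decoyRE (alphabet c)))

theorem langE_haltingInput_eq_iff (c : Code) (n : ℕ) :
    LangE (haltingInput c n).1.1 (constraintOf (haltingInput c n).1.2) =
        LangE (haltingInput c n).2.1 (constraintOf (haltingInput c n).2.2) ↔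
      ¬ (c.eval [n]).Dom := by
  rw [← reflTransGen_initCfg_iff]
  exact langE_errorUnion_eq_iff codeSystem_isWellFormed (fun _ => mem_alphabet_of_mem_rhs _)
    (mem_alphabet.2 nofun) (mem_alphabet.2 nofun) (encodeCfg_initCfg_mem_wordsOver c [n])
    (by simp [encodeCfg, initCfg, encodeCont]) fun _ => isSimulation_codeSystem.eq_final_or_exists

theorem computable_encodeInput_haltingInput (c : Code) :
    Computable fun n => encodeInput (haltingInput c n) := by
  have hstart : Computable fun n =>
      encodeWord [Letter.comp c, .bottom, .value] ++
        (encodeWord (List.replicate n Letter.one) ++ encodeWord [Letter.comma, .nil]) :=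
    Computable.list_append.comp (.const _)
      (Computable.list_append.comp (computable_encodeWord_replicate _) (.const _))
  refine computable_encodeInput_errorUnion codeSystem
    (computable_encRE_add (.const _) (computable_encRE_historyRE ?_)) _
  refine hstart.of_eq fun n => ?_
  rw [← encodeWord_append, ← encodeWord_append]
  simp [encodeCfg, initCfg, encodeCont, encodeList]

theorem exists_code_eval_encode_dom_iff :
    ∃ c₀ : Code, ∀ c : Nat.Partrec.Code, (c₀.eval [encode c]).Dom ↔ (c.eval 0).Dom := by
  have h : Partrec fun n : ℕ => (Denumerable.ofNat Nat.Partrec.Code n).eval 0 :=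
    Nat.Partrec.Code.eval_part.comp (.ofNat _) (.const 0)
  obtain ⟨c₀, hc₀⟩ := Code.exists_code (Nat.Partrec'.part_iff₁.2 h)
  refine ⟨c₀, fun c => ?_⟩
  have hc := hc₀ (encode c ::ᵥ .nil)
  rw [List.Vector.head_cons, Denumerable.ofNat_encode] at hc
  exact iff_of_eq (congrArg Part.Dom hc)

end Halting

end ErasingPattern

/-- The equivalence problem for erasing pattern languages with regular constraints over
the binary alphabet is undecidable. -/
theorem equivalence_EPatternRegConstraints_undecidable :
    ¬ ∃ f : ℕ → Bool, Computable f ∧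
      ∀ inp : (Pattern × RegConstraint) × (Pattern × RegConstraint),
        (f (encodeInput inp) = true ↔
          LangE inp.1.1 (constraintOf inp.1.2) = LangE inp.2.1 (constraintOf inp.2.2)) := by
  rintro ⟨f, hf, h⟩
  obtain ⟨c₀, hc₀⟩ := ErasingPattern.exists_code_eval_encode_dom_iff
  refine ComputablePred.halting_problem 0 (ComputablePred.computable_iff.2
    ⟨fun c => !f (encodeInput (ErasingPattern.haltingInput c₀ (Encodable.encode c))), ?_, ?_⟩)
  · exact Primrec.not.to_comp.comp (hf.comp
      ((ErasingPattern.computable_encodeInput_haltingInput c₀).comp Computable.encode))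
  · funext c
    have hc := h (ErasingPattern.haltingInput c₀ (Encodable.encode c))
    rw [ErasingPattern.langE_haltingInput_eq_iff, hc₀] at hc
    rw [Bool.not_eq_true', ← Bool.not_eq_true, hc, not_not]
end

section
/- The equivalence problem for erasing pattern languages with regular constraints is undecidable already for terminal-free patterns: for the binary alphabet Σ = {0,#} there is no algorithm that, given two patterns with regular constraints (α, r_α) and (β, r_β) in which α and β contain no terminal symbols (i.e., α, β are finite words over the variable set ℕ alone), decides whether L_E(α, r_α) = L_E(β, r_β). Formally, the predicate 'L_E(α, r_α) = L_E(β, r_β)' on such encoded terminal-free input pairs is not a computable predicate. -/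
/-- Terminal-free patterns: finite words over the variable set `ℕ` alone. -/
abbrev TFPattern := List ℕ

/-- A standard encoding of a terminal-free input pair `((α, r_α), (β, r_β))` into `ℕ`. -/
def encodeTFInput (inp : (TFPattern × RegConstraint) × (TFPattern × RegConstraint)) : ℕ :=
  Encodable.encode ((inp.1.1, inp.1.2.map fun q => (q.1, encRE q.2)),
                    (inp.2.1, inp.2.2.map fun q => (q.1, encRE q.2)))


/-!
Primitive recursive functions are computed by nondeterministic register programs, which are regular
expressions over register actions. Hence it is undecidable, for suitable fixed programs `A` and `Q`,
which `n` make `A ^ n * Q` halt.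

Write a run as the list of its actions and register contents, all in unary. A regular expression can
describe the histories whose actions follow a given program, but it cannot check that the contents
of the registers change as the actions demand. A pattern can detect the opposite: in
`x₀ x₁ x₂ x₁ x₃ x₄`, let `x₁` be `#` followed by `m` zeros, let `x₂` start with `p` zeros, and let
`x₃` be `q` zeros followed by `#`. The pattern then matches words with blocks of `m + p` and `m + q`
zeros separated by the rest of `x₂`. If `p` and `q` range over suitable disjoint sets, two given
blocks fit if and only if their lengths differ. So the regular language for `x₂` can be chosen such
that exactly the histories with an incorrect register are matched. Allowing `x₂` to be an arbitrary
history that follows a program adds no new word if all these histories are incorrect, but a correct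
one adds a new word; thus the pattern language changes if and only if the program halts.
-/

namespace PatternEquivalence

open RegularExpression
open scoped Computability

/-! ### Nondeterministic register programs -/

/-- A link says that after an action register `tgt` holds what register `src` held before it,
plus one if `inc` is set. -/
structure Link (K : ℕ) where
  src : Fin K
  tgt : Fin K
  inc : Bool
  deriving DecidableEq, Fintype

/-- The contents of the registers of a machine with `K` registers. -/
abbrev Store (K : ℕ) := Fin K → ℕ

/-- An action of a register machine: a finite set of links to be respected. It acts as a test when
a register is the target of two links, and lets a register change arbitrarily when it is the
target of none. -/
abbrev Action (K : ℕ) := Finset (Link K)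

/-- A nondeterministic program is a regular expression over actions; its runs follow the words
it matches. -/
abbrev Program (K : ℕ) := RegularExpression (Action K)

section Programs

variable {K : ℕ}

/-- The link `l` is respected by a transition from `s` to `t`. -/
def Link.Holds (l : Link K) (s t : Store K) : Prop := t l.tgt = s l.src + l.inc.toNat

/-- The transition relation of an action. -/
def Step (a : Action K) (s t : Store K) : Prop := ∀ l ∈ a, l.Holds s t

/-- The transition relation of a sequence of actions. -/
def Exec : List (Action K) → Store K → Store K → Prop
  | [], s, t => s = t
  | a :: u, s, t => ∃ r, Step a s r ∧ Exec u r t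

/-- The input-output relation of a program. -/
def Run (P : Program K) (s t : Store K) : Prop := ∃ u ∈ P.matches', Exec u s t

/-- A program halts if it has a run from the store with all registers zero. -/
def Halts (P : Program K) : Prop := ∃ t, Run P 0 t

theorem exec_append {u v : List (Action K)} {s t : Store K} :
    Exec (u ++ v) s t ↔ ∃ r, Exec u s r ∧ Exec v r t := by
  induction u generalizing s with
  | nil => simp [Exec]
  | cons a u ih =>
    simp only [List.cons_append, Exec, ih]
    exact ⟨fun ⟨q, hq, r, hr, ht⟩ => ⟨r, ⟨q, hq, hr⟩, ht⟩,
      fun ⟨r, ⟨q, hq, hr⟩, ht⟩ => ⟨q, hq, r, hr, ht⟩⟩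

theorem run_char {a : Action K} {s t : Store K} : Run (char a) s t ↔ Step a s t := by
  change (∃ u ∈ ({[a]} : Set _), Exec u s t) ↔ _
  simp [Exec]

theorem run_mul {P Q : Program K} {s t : Store K} :
    Run (P * Q) s t ↔ ∃ r, Run P s r ∧ Run Q r t := by
  simp only [Run, matches'_mul, Language.mem_mul]
  constructor
  · rintro ⟨-, ⟨u, hu, v, hv, rfl⟩, h⟩
    obtain ⟨r, hr, ht⟩ := exec_append.1 h
    exact ⟨r, ⟨u, hu, hr⟩, v, hv, ht⟩
  · rintro ⟨r, ⟨u, hu, hr⟩, v, hv, ht⟩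
    exact ⟨u ++ v, ⟨u, hu, v, hv, rfl⟩, exec_append.2 ⟨r, hr, ht⟩⟩

theorem run_star {P : Program K} {s t : Store K} :
    Run (star P) s t ↔ Relation.ReflTransGen (Run P) s t := by
  constructor
  · rintro ⟨u, hu, h⟩
    obtain ⟨L, rfl, hL⟩ := Language.mem_kstar.1 hu
    clear hu
    induction L generalizing s with
    | nil => obtain rfl : s = t := h; exact .refl
    | cons v L ih =>
      obtain ⟨r, hr, ht⟩ := exec_append.1 h
      have hL' := List.forall_mem_cons.1 hL
      exact .head ⟨v, hL'.1, hr⟩ (ih hL'.2 ht)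
  · intro h
    induction h using Relation.ReflTransGen.head_induction_on with
    | refl => exact ⟨[], Language.nil_mem_kstar _, rfl⟩
    | head hr _ ih =>
      obtain ⟨u, hu, hr⟩ := hr
      obtain ⟨v, hv, ht⟩ := ih
      obtain ⟨L, rfl, hL⟩ := Language.mem_kstar.1 hv
      exact ⟨(u :: L).flatten, Language.join_mem_kstar (List.forall_mem_cons.2 ⟨hu, hL⟩),
        exec_append.2 ⟨_, hr, ht⟩⟩

/-- The links keeping the registers in `S` unchanged. -/
def keep (S : Finset (Fin K)) : Action K := S.image fun i => ⟨i, i, false⟩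

theorem step_keep {S : Finset (Fin K)} {s t : Store K} :
    Step (keep S) s t ↔ ∀ i ∈ S, t i = s i := by
  simp [Step, keep, Link.Holds]

theorem step_insert {l : Link K} {a : Action K} {s t : Store K} :
    Step (insert l a) s t ↔ l.Holds s t ∧ Step a s t :=
  Finset.forall_mem_insert ..

/-- The program setting register `d` to the content of register `j`, plus one if `c` is set. -/
def assign (d j : Fin K) (c : Bool) : Program K :=
  char (insert ⟨j, d, c⟩ (keep (Finset.univ.erase d)))

/-- The program that goes through, doing nothing, if registers `i` and `j` agree. -/
def guardEq (i j : Fin K) : Program K := char (insert ⟨j, i, false⟩ (keep Finset.univ))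

theorem run_assign {d j : Fin K} {c : Bool} {s t : Store K} :
    Run (assign d j c) s t ↔ t = Function.update s d (s j + c.toNat) := by
  simp [assign, run_char, step_insert, step_keep, Link.Holds, Function.eq_update_iff]

theorem run_guardEq {i j : Fin K} {s t : Store K} :
    Run (guardEq i j) s t ↔ t = s ∧ s i = s j := by
  simp only [guardEq, run_char, step_insert, step_keep, Link.Holds, Finset.mem_univ,
    forall_const, Bool.toNat_false, add_zero, funext_iff]
  exact ⟨fun ⟨h, h'⟩ => ⟨h', h' i ▸ h⟩, fun ⟨h', h⟩ => ⟨h' i ▸ h, h'⟩⟩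

theorem pow_succ_eq_mul {α : Type*} (P : RegularExpression α) (n : ℕ) : P ^ (n + 1) = P ^ n * P :=
  rfl

theorem run_assign_pow {r : Fin K} {n : ℕ} {s t : Store K} :
    Run (assign r r true ^ n) s t ↔ t = Function.update s r (s r + n) := by
  induction n generalizing t with
  | zero => simp [Run, Exec, eq_comm]
  | succ n ih => simp [pow_succ_eq_mul, run_mul, run_assign, ih, add_assoc]

theorem run_star_assign {r : Fin K} {s t : Store K} :
    Run (star (assign r r true)) s t ↔ ∃ n, t = Function.update s r (s r + n) := by
  simp only [← run_assign_pow, Run, matches'_star, Language.kstar_eq_iSup_pow, Language.mem_iSup,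
    matches'_pow]
  exact ⟨fun ⟨u, ⟨n, hn⟩, h⟩ => ⟨n, u, hn, h⟩, fun ⟨n, u, hn, h⟩ => ⟨u, ⟨n, hn⟩, h⟩⟩


/-- Total correctness: `P` has a run from `s`, and all its runs from `s` end in stores
satisfying `Φ`. -/
def Ensures (P : Program K) (s : Store K) (Φ : Store K → Prop) : Prop :=
  (∃ t, Run P s t) ∧ ∀ t, Run P s t → Φ t

theorem Ensures.mono {P : Program K} {s : Store K} {Φ Ψ : Store K → Prop} (h : Ensures P s Φ)
    (hΦ : ∀ t, Φ t → Ψ t) : Ensures P s Ψ :=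
  ⟨h.1, fun t ht => hΦ t (h.2 t ht)⟩

theorem Ensures.mul {P Q : Program K} {s : Store K} {Φ Ψ : Store K → Prop} (hP : Ensures P s Φ)
    (hQ : ∀ t, Φ t → Ensures Q t Ψ) : Ensures (P * Q) s Ψ := by
  obtain ⟨⟨r, hr⟩, hΦ⟩ := hP
  obtain ⟨t, ht⟩ := (hQ r (hΦ r hr)).1
  refine ⟨⟨t, run_mul.2 ⟨r, hr, ht⟩⟩, fun t ht => ?_⟩
  obtain ⟨r, hr, ht⟩ := run_mul.1 ht
  exact (hQ r (hΦ r hr)).2 t ht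

theorem ensures_assign {d j : Fin K} {c : Bool} {s : Store K} {Φ : Store K → Prop} :
    Ensures (assign d j c) s Φ ↔ Φ (Function.update s d (s j + c.toNat)) := by
  simp [Ensures, run_assign]

theorem ensures_one {s : Store K} {Φ : Store K → Prop} : Ensures 1 s Φ ↔ Φ s := by
  simp [Ensures, Run, Exec]

theorem Ensures.star_guardEq {P : Program K} {i j : Fin K} {s : Store K} {n : ℕ}
    {I : ℕ → Store K → Prop} (h0 : I 0 s) (hP : ∀ k t, I k t → Ensures P t (I (k + 1)))
    (hn : ∀ k t, I k t → (t i = t j ↔ k = n)) : Ensures (star P * guardEq i j) s (I n) := by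
  have reach (k : ℕ) : ∃ t, Run (star P) s t ∧ I k t := by
    induction k with
    | zero => exact ⟨s, run_star.2 .refl, h0⟩
    | succ k ih =>
      obtain ⟨r, hr, hI⟩ := ih
      obtain ⟨⟨t, ht⟩, hI'⟩ := hP k r hI
      exact ⟨t, run_star.2 ((run_star.1 hr).tail ht), hI' t ht⟩
  have inv {t : Store K} (ht : Relation.ReflTransGen (Run P) s t) : ∃ k, I k t := by
    induction ht with
    | refl => exact ⟨0, h0⟩
    | tail _ ht ih =>
      obtain ⟨k, hk⟩ := ih
      exact ⟨k + 1, (hP k _ hk).2 _ ht⟩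
  refine ⟨?_, fun t ht => ?_⟩
  · obtain ⟨t, ht, hI⟩ := reach n
    exact ⟨t, run_mul.2 ⟨t, ht, run_guardEq.2 ⟨rfl, (hn n t hI).2 rfl⟩⟩⟩
  · obtain ⟨t, hr, ht⟩ := run_mul.1 ht
    obtain ⟨rfl, hij⟩ := run_guardEq.1 ht
    obtain ⟨k, hk⟩ := inv (run_star.1 hr)
    rwa [← (hn k _ hk).1 hij]

end Programs

/-! ### Compiling primitive recursive functions -/

/-- With arguments in the registers `args` and zero in register `0`, the program `P` stores the
value of `f` in register `d`, changing no other register below `b`. -/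
def Computes {K n : ℕ} [NeZero K] (P : Program K) (f : List.Vector ℕ n → ℕ) (args : Fin n → Fin K)
    (d : Fin K) (b : ℕ) : Prop :=
  ∀ v s, s 0 = 0 → (∀ i, s (args i) = v.get i) →
    Ensures P s fun t => t d = f v ∧ ∀ i : Fin K, i < b → i ≠ d → t i = s i

/-- The function `f` is computed by programs that use a bounded number `w` of scratch
registers, starting from register `b`. -/
def Compilable {n : ℕ} (f : List.Vector ℕ n → ℕ) : Prop :=
  ∃ w, ∀ {K : ℕ} [NeZero K] {b : ℕ} {args : Fin n → Fin K} {d : Fin K}, b + w ≤ K →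
    (∀ i, args i < b) → d < b → ∃ P : Program K, Computes P f args d b

theorem computes_assign {K n : ℕ} [NeZero K] {f : List.Vector ℕ n → ℕ} {args : Fin n → Fin K}
    {d j : Fin K} {c : Bool} {b : ℕ}
    (h : ∀ v (s : Store K), s 0 = 0 → (∀ i, s (args i) = v.get i) → s j + c.toNat = f v) :
    Computes (assign d j c) f args d b := by
  intro v s h0 hv
  simp +contextual [ensures_assign, h v s h0 hv]

theorem compilable_zero : Compilable (fun _ : List.Vector ℕ 0 => 0) :=
  ⟨0, fun _ _ _ => ⟨assign _ 0 false, computes_assign fun _ _ h0 _ => by simp [h0]⟩⟩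

theorem compilable_succ : Compilable (fun v : List.Vector ℕ 1 => v.head.succ) :=
  ⟨0, fun {_ _ _ args _} _ _ _ => ⟨assign _ (args 0) true, computes_assign fun _ _ _ hv => by
    simp [hv 0]⟩⟩

theorem compilable_get {n : ℕ} (i : Fin n) : Compilable (fun v : List.Vector ℕ n => v.get i) :=
  ⟨0, fun {_ _ _ args _} _ _ _ => ⟨assign _ (args i) false, computes_assign fun _ _ _ hv => by
    simp [hv i]⟩⟩

theorem Computes.list_prod {K m n b : ℕ} [NeZero K] {g : Fin n → List.Vector ℕ m → ℕ}
    {args : Fin m → Fin K} {e : Fin n → Fin K} {G : Fin n → Program K} (hb : 0 < b)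
    (hargs : ∀ i, args i < b) (he : ∀ i, (e i : ℕ) = b + i)
    (hG : ∀ i, Computes (G i) (g i) args (e i) (b + n)) (L : List (Fin n)) {v : List.Vector ℕ m}
    {s : Store K} (h0 : s 0 = 0) (hv : ∀ i, s (args i) = v.get i) :
    Ensures (L.map G).prod s fun t =>
      (∀ i, i ∈ L ∨ s (e i) = g i v → t (e i) = g i v) ∧ ∀ i : Fin K, i < b → t i = s i := by
  induction L generalizing s with
  | nil => simp [ensures_one]
  | cons j L ih =>
    rw [List.map_cons, List.prod_cons]
    refine (hG j v s h0 hv).mul fun r ⟨hj, hr⟩ => ?_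
    have low (i : Fin K) (hi : i < b) : r i = s i := by
      refine hr i (by omega) fun h => ?_
      have := he j
      rw [h] at hi
      omega
    have fresh (i : Fin n) (h : s (e i) = g i v) : r (e i) = g i v := by
      rcases eq_or_ne i j with rfl | hij
      · exact hj
      · have he_ne : e i ≠ e j := fun h => hij (Fin.ext (by simpa [he] using congrArg Fin.val h))
        rw [hr _ (by rw [he]; omega) he_ne, h]
    refine (ih ((low 0 (by simpa using hb)).trans h0)
      fun i => (low _ (hargs i)).trans (hv i)).mono fun t ⟨ht, ht'⟩ => ⟨?_, fun i hi => ?_⟩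
    · rintro i (hi | hi)
      · rcases List.mem_cons.1 hi with rfl | hi
        · exact ht i (.inr hj)
        · exact ht i (.inl hi)
      · exact ht i (.inr (fresh i hi))
    · rw [ht' i hi, low i hi]

theorem Compilable.comp {m n : ℕ} {f : List.Vector ℕ n → ℕ} {g : Fin n → List.Vector ℕ m → ℕ}
    (hf : Compilable f) (hg : ∀ i, Compilable (g i)) :
    Compilable fun v => f (List.Vector.ofFn fun i => g i v) := by
  obtain ⟨wf, hf⟩ := hf
  choose wg hg using hg
  refine ⟨n + (wf + ∑ i, wg i), fun {K _ b args d} hK hargs hd => ?_⟩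
  have hwg (i : Fin n) : wg i ≤ ∑ i, wg i :=
    Finset.single_le_sum_of_canonicallyOrdered (Finset.mem_univ i)
  let e (i : Fin n) : Fin K := ⟨b + i, by omega⟩
  have he (i : Fin n) : (e i : ℕ) = b + i := rfl
  have hG (i : Fin n) : ∃ P : Program K, Computes P (g i) args (e i) (b + n) :=
    hg i (by have := hwg i; omega) (fun j => by have := hargs j; omega) (by rw [he]; omega)
  choose G hG using hG
  obtain ⟨F, hF⟩ := hf (b := b + n) (args := e) (d := d) (by omega) (fun i => by rw [he]; omega)
    (by omega)
  refine ⟨((List.finRange n).map G).prod * F, fun v s h0 hv => ?_⟩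
  refine (Computes.list_prod (by omega) hargs he hG _ h0 hv).mul fun r ⟨hr, hr'⟩ => ?_
  refine (hF (List.Vector.ofFn fun i => g i v) r ?_ fun i => ?_).mono fun t ⟨ht, ht'⟩ =>
    ⟨ht, fun i hi hid => ?_⟩
  · rw [hr' 0 (by simp; omega), h0]
  · rw [hr i (.inl (List.mem_finRange i)), List.Vector.get_ofFn]
  · rw [ht' i (by omega) hid, hr' i hi]

theorem Computes.prec_step {K n b : ℕ} [NeZero K] {g : List.Vector ℕ (n + 2) → ℕ}
    {args : Fin n → Fin K} {a c : Fin K} {G : Program K} (hc : (c : ℕ) = b) (ha : (a : ℕ) = b + 1)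
    (hG : Computes G g (Fin.cons c (Fin.cons a args)) a (b + 2)) {v : List.Vector ℕ n}
    {s : Store K} (h0 : s 0 = 0) (hv : ∀ i, s (args i) = v.get i) :
    Ensures (G * assign c c true) s fun t =>
      t c = s c + 1 ∧ t a = g (s c ::ᵥ s a ::ᵥ v) ∧ ∀ i : Fin K, i < b → t i = s i := by
  have hac : a ≠ c := fun h => by simp [h, hc] at ha
  refine (hG (s c ::ᵥ s a ::ᵥ v) s h0 ?_).mul fun r ⟨hra, hr⟩ => ?_
  · simpa [Fin.forall_fin_succ] using hv
  · have hrc : r c = s c := hr c (by omega) hac.symm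
    refine ensures_assign.2 ⟨by simp [hrc], by simp [hac, hra], fun i hi => ?_⟩
    rw [Function.update_of_ne (by rintro rfl; omega), hr i (by omega) (by rintro rfl; omega)]

theorem Computes.prec {K n b : ℕ} [NeZero K] {f : List.Vector ℕ n → ℕ}
    {g : List.Vector ℕ (n + 2) → ℕ} {args : Fin (n + 1) → Fin K} {a c d : Fin K} {F G : Program K}
    (hargs : ∀ i, args i < b) (hd : d < b) (hc : (c : ℕ) = b) (ha : (a : ℕ) = b + 1)
    (hF : Computes F f (fun i => args i.succ) a (b + 2))
    (hG : Computes G g (Fin.cons c (Fin.cons a fun i => args i.succ)) a (b + 2)) :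
    Computes (F * (assign c 0 false * (star (G * assign c c true) * guardEq c (args 0) *
      assign d a false)))
      (fun v => v.head.rec (f v.tail) fun y IH => g (y ::ᵥ IH ::ᵥ v.tail)) args d b := by
  intro v s h0 hv
  let I (k : ℕ) (t : Store K) : Prop :=
    t c = k ∧ t a = k.rec (f v.tail) (fun y IH => g (y ::ᵥ IH ::ᵥ v.tail)) ∧
      ∀ i : Fin K, i < b → t i = s i
  have hac : a ≠ c := fun h => by simp [h, hc] at ha
  have zero_lt : ((0 : Fin K) : ℕ) < b := by rw [Fin.val_zero]; omega
  have hv' (i : Fin n) : s (args i.succ) = v.tail.get i := by simp [hv]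
  have loop (r : Store K) (hr : I 0 r) :
      Ensures (star (G * assign c c true) * guardEq c (args 0)) r (I v.head) := by
    refine .star_guardEq hr (fun k t ⟨htc, hta, ht⟩ => ?_) fun k t ⟨htc, _, ht⟩ => ?_
    · refine (hG.prec_step hc ha ((ht 0 zero_lt).trans h0)
        fun i => (ht _ (hargs _)).trans (hv' i)).mono fun u ⟨huc, hua, hu⟩ => ?_
      exact ⟨by rw [huc, htc], by rw [hua, htc, hta], fun i hi => (hu i hi).trans (ht i hi)⟩
    · rw [htc, ht _ (hargs 0), hv 0, List.Vector.get_zero]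
  refine (hF v.tail s h0 hv').mul fun r ⟨hra, hr⟩ => .mul (Φ := I 0) ?_ fun t ht =>
    (loop t ht).mul fun u ⟨_, hua, hu⟩ => ?_
  · have hr' (i : Fin K) (hi : i < b) : r i = s i := hr i (by omega) (by rintro rfl; omega)
    refine ensures_assign.2 ⟨by simp [(hr' 0 zero_lt).trans h0], ?_, fun i hi => ?_⟩
    · rw [Function.update_of_ne hac, hra, Nat.rec_zero]
    · rw [Function.update_of_ne (by rintro rfl; omega), hr' i hi]
  · exact ensures_assign.2 ⟨by simp [hua], fun i hi hid => by simp [hid, hu i hi]⟩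

theorem Compilable.prec {n : ℕ} {f : List.Vector ℕ n → ℕ} {g : List.Vector ℕ (n + 2) → ℕ}
    (hf : Compilable f) (hg : Compilable g) :
    Compilable fun v : List.Vector ℕ (n + 1) =>
      v.head.rec (f v.tail) fun y IH => g (y ::ᵥ IH ::ᵥ v.tail) := by
  obtain ⟨wf, hf⟩ := hf
  obtain ⟨wg, hg⟩ := hg
  refine ⟨2 + (wf + wg), fun {K _ b args d} hK hargs hd => ?_⟩
  let c : Fin K := ⟨b, by omega⟩
  let a : Fin K := ⟨b + 1, by omega⟩
  have hargs' (i : Fin n) : args i.succ < b + 2 := (hargs _).trans (by omega)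
  have ha : a < b + 2 := Nat.lt_succ_self _
  obtain ⟨F, hF⟩ := hf (args := fun i => args i.succ) (by omega) hargs' ha
  obtain ⟨G, hG⟩ := hg (args := Fin.cons c (Fin.cons a fun i => args i.succ)) (by omega)
    (by simpa [Fin.forall_fin_succ, c, a] using hargs') ha
  exact ⟨_, Computes.prec hargs hd rfl rfl hF hG⟩

theorem compilable_of_primrec' {n : ℕ} {f : List.Vector ℕ n → ℕ} (hf : Nat.Primrec' f) :
    Compilable f := by
  induction hf with
  | zero => exact compilable_zero
  | succ => exact compilable_succ
  | get i => exact compilable_get i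
  | comp g _ _ hf hg => exact hf.comp hg
  | prec _ _ hf hg => exact hf.prec hg

/-! ### An undecidable halting problem -/

theorem exists_primrec_not_computablePred :
    ∃ g : ℕ → ℕ → ℕ, Primrec₂ g ∧ ¬ ComputablePred fun n => ∃ k, g k n = 0 := by
  let c (n : ℕ) : Nat.Partrec.Code := Denumerable.ofNat _ n
  refine ⟨fun k n => if (Nat.Partrec.Code.evaln k (c n) 0).isSome then 0 else 1, ?_, fun h => ?_⟩
  · refine Primrec.ite (Primrec.eq.comp (Primrec.option_isSome.comp ?_) (.const true))
      (.const 0) (.const 1)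
    exact Nat.Partrec.Code.primrec_evaln.comp
      ((Primrec.fst.pair ((Primrec.ofNat _).comp Primrec.snd)).pair (.const 0))
  · have halts_iff (p : Nat.Partrec.Code) :
        (∃ k, (Nat.Partrec.Code.evaln k p 0).isSome) ↔ (p.eval 0).Dom := by
      simp only [Option.isSome_iff_exists, Part.dom_iff_mem, Nat.Partrec.Code.evaln_complete]
      exact exists_comm
    refine ComputablePred.halting_problem 0 (ComputablePred.of_eq
      (ComputablePred.computable_of_manyOneReducible (.mk _ Computable.encode) h) fun p => ?_)
    simpa [c, Option.isSome_iff_ne_none] using halts_iff p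

theorem halts_search_iff {K n b : ℕ} [NeZero K] {g : ℕ → ℕ → ℕ} {P : Program K} {x y d : Fin K}
    (hP : Computes P (fun v : List.Vector ℕ 2 => g v.head v.tail.head) ![y, x] d b)
    (hx : x ≠ 0) (hy : y ≠ 0) (hxy : x ≠ y) (hd : d ≠ 0) (hb : 0 < b) :
    Halts (assign x x true ^ n * (star (assign y y true) * P * guardEq d 0)) ↔
      ∃ k, g k n = 0 := by
  let s (k : ℕ) : Store K := Function.update (Function.update 0 x n) y k
  have correct (k : ℕ) : Ensures P (s k) fun t => t d = g k n ∧ t 0 = 0 := by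
    have h0 : s k 0 = 0 := by simp [s, hx.symm, hy.symm]
    refine (hP (k ::ᵥ n ::ᵥ .nil) (s k) h0 ?_).mono fun t ⟨htd, ht⟩ => ⟨htd, ?_⟩
    · simp [Fin.forall_fin_succ, s, hxy]
    · rw [ht 0 (by simpa using hb) hd.symm, h0]
  have halts_iff : Halts (assign x x true ^ n * (star (assign y y true) * P * guardEq d 0)) ↔
      ∃ k t, Run P (s k) t ∧ t d = t 0 := by
    simp only [Halts, run_mul, run_assign_pow, run_star_assign, run_guardEq]
    simpa [s, hxy.symm, ← exists_and_right] using exists_comm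
  rw [halts_iff]
  refine exists_congr fun k => ⟨fun ⟨t, ht, htd⟩ => ?_, fun hk => ?_⟩
  · rw [← ((correct k).2 t ht).1, htd, ((correct k).2 t ht).2]
  · obtain ⟨t, ht⟩ := (correct k).1
    exact ⟨t, ht, by rw [((correct k).2 t ht).1, hk, ((correct k).2 t ht).2]⟩

theorem exists_not_computablePred_halts : ∃ (K : ℕ) (A Q : Program K),
    ¬ ComputablePred fun n : ℕ => Halts (A ^ n * Q) := by
  obtain ⟨g, hg, hg'⟩ := exists_primrec_not_computablePred
  obtain ⟨w, hw⟩ := compilable_of_primrec' (Nat.Primrec'.prim_iff₂.2 hg)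
  let reg (i : Fin 4) : Fin (4 + w) := Fin.castAdd w i
  have reg_lt (i : Fin 4) : (reg i : ℕ) < 4 := i.2
  have reg_ne {i j : Fin 4} (h : i ≠ j) : reg i ≠ reg j := (Fin.castAdd_injective 4 w).ne h
  obtain ⟨P, hP⟩ := hw (args := ![reg 2, reg 1]) le_rfl
    (Fin.forall_fin_two.2 ⟨reg_lt 2, reg_lt 1⟩) (reg_lt 3)
  have reg_ne_zero {i : Fin 4} (h : i ≠ 0) : reg i ≠ 0 := reg_ne h
  exact ⟨4 + w, _, _, fun h => hg' (h.of_eq fun n => halts_search_iff hP (reg_ne_zero (by decide))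
    (reg_ne_zero (by decide)) (reg_ne (by decide)) (reg_ne_zero (by decide)) four_pos)⟩

/-! ### Lists of numbers in unary -/

/-- The word `#0ⁿ¹#0ⁿ²⋯` coding the list `[n₁, n₂, …]`. -/
def unary (l : List ℕ) : List Bool := l.flatMap fun n => true :: List.replicate n false

@[simp]
theorem unary_nil : unary [] = [] := rfl

@[simp]
theorem unary_cons (n : ℕ) (l : List ℕ) :
    unary (n :: l) = true :: (List.replicate n false ++ unary l) := rfl

@[simp]
theorem unary_append (l m : List ℕ) : unary (l ++ m) = unary l ++ unary m :=
  List.flatMap_append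

theorem unary_singleton_add (m n : ℕ) : unary [m + n] = unary [m] ++ List.replicate n false := by
  simp

theorem splitOn_append_unary (y : List Bool) (l : List ℕ) :
    (y ++ unary l).splitOn true = y.splitOn true ++ l.map (List.replicate · false) := by
  induction l generalizing y with
  | nil => simp
  | cons n l ih => simp [List.splitOn_append_cons_self, ih, List.splitOn_eq_singleton]

theorem eq_append_of_unary_eq {l m : List ℕ} {y z : List Bool}
    (h : unary l = y ++ unary m ++ true :: z) : ∃ l₁ l₂, l = l₁ ++ m ++ l₂ := by
  have split := congrArg (List.splitOn true) h
  rw [List.splitOn_append_cons_self, splitOn_append_unary, ← List.nil_append (unary l),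
    splitOn_append_unary, List.splitOn_nil, List.append_assoc] at split
  obtain ⟨x, xs, hxs⟩ := List.exists_cons_of_ne_nil (List.splitOn_ne_nil true y)
  rw [hxs, List.cons_append, List.nil_append, List.cons_append, List.cons.injEq] at split
  obtain ⟨l₁, l', rfl, -, h'⟩ := List.map_eq_append_iff.1 split.2
  obtain ⟨l₂, l₃, rfl, hm, -⟩ := List.map_eq_append_iff.1 h'
  rw [List.map_inj_right fun _ _ h => by simpa using congrArg List.length h] at hm
  exact ⟨l₁, l₃, by rw [hm, List.append_assoc]⟩

/-! ### Regular expressions -/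

section Expressions

variable {α β : Type*}

/-- The regular expression matching the word `u` only. -/
def word (u : List α) : RegularExpression α := (u.map char).prod

@[simp]
theorem mem_word {u w : List α} : w ∈ (word u).matches' ↔ w = u := by
  induction u generalizing w with
  | nil => rfl
  | cons a u ih =>
    change w ∈ (char a * word u).matches' ↔ _
    rw [matches'_mul, Language.mem_mul, ← List.singleton_append]
    simp only [ih]
    change (∃ v ∈ ({[a]} : Set _), _) ↔ _
    simp [eq_comm]

theorem mem_mul {P Q : RegularExpression α} {w : List α} :
    w ∈ (P * Q).matches' ↔ ∃ u ∈ P.matches', ∃ v ∈ Q.matches', u ++ v = w :=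
  Language.mem_mul

theorem mem_sum {L : List (RegularExpression α)} {w : List α} :
    w ∈ L.sum.matches' ↔ ∃ P ∈ L, w ∈ P.matches' := by
  induction L with
  | nil => simp
  | cons P L ih =>
    rw [List.sum_cons, matches'_add, Language.mem_add, ih, List.exists_mem_cons_iff]

theorem mem_star_word {u w : List α} :
    w ∈ (star (word u)).matches' ↔ ∃ n, w = (List.replicate n u).flatten := by
  rw [matches'_star, Language.mem_kstar]
  constructor
  · rintro ⟨L, rfl, hL⟩
    exact ⟨L.length, by rw [← List.eq_replicate_of_mem fun v hv => mem_word.1 (hL v hv)]⟩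
  · rintro ⟨n, rfl⟩
    exact ⟨_, rfl, fun v hv => mem_word.2 (List.eq_of_mem_replicate hv)⟩

/-- The regular expression `P` with an expression over a new alphabet substituted for every
letter. -/
def subst (f : α → RegularExpression β) : RegularExpression α → RegularExpression β
  | .zero => 0
  | .epsilon => 1
  | .char a => f a
  | .plus P Q => subst f P + subst f Q
  | .comp P Q => subst f P * subst f Q
  | .star P => star (subst f P)

theorem subst_pow_mul (f : α → RegularExpression β) (P Q : RegularExpression α) (n : ℕ) :
    subst f (P ^ n * Q) = subst f P ^ n * subst f Q := by
  have : subst f (P ^ n) = subst f P ^ n := by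
    induction n with
    | zero => rfl
    | succ n ih => rw [pow_succ_eq_mul, pow_succ_eq_mul, ← ih]; rfl
  rw [← this]; rfl

/-- The language `L` with a language over a new alphabet substituted for every letter. -/
def substLanguage (f : α → Language β) (L : Language α) : Language β :=
  {w | ∃ u ∈ L, w ∈ (u.map f).prod}

theorem mem_substLanguage {f : α → Language β} {L : Language α} {w : List β} :
    w ∈ substLanguage f L ↔ ∃ u ∈ L, w ∈ (u.map f).prod := Iff.rfl

theorem substLanguage_singleton (f : α → Language β) (u : List α) :
    substLanguage f ({u} : Set (List α)) = (u.map f).prod := by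
  ext w
  exact ⟨fun ⟨_, hv, hw⟩ => Set.mem_singleton_iff.1 hv ▸ hw, fun hw => ⟨u, rfl, hw⟩⟩

theorem substLanguage_mul (f : α → Language β) (L M : Language α) :
    substLanguage f (L * M) = substLanguage f L * substLanguage f M := by
  ext w
  constructor
  · rintro ⟨-, ⟨u, hu, v, hv, rfl⟩, hw⟩
    rw [List.map_append, List.prod_append] at hw
    obtain ⟨x, hx, y, hy, rfl⟩ := Language.mem_mul.1 hw
    exact Language.append_mem_mul ⟨u, hu, hx⟩ ⟨v, hv, hy⟩
  · rintro ⟨x, ⟨u, hu, hx⟩, y, ⟨v, hv, hy⟩, rfl⟩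
    refine ⟨u ++ v, Language.append_mem_mul hu hv, ?_⟩
    rw [List.map_append, List.prod_append]
    exact Language.append_mem_mul hx hy

theorem substLanguage_kstar (f : α → Language β) (L : Language α) :
    substLanguage f L∗ = (substLanguage f L)∗ := by
  have pow (n : ℕ) : substLanguage f (L ^ n) = substLanguage f L ^ n := by
    induction n with
    | zero => exact substLanguage_singleton f []
    | succ n ih => rw [pow_succ, pow_succ, substLanguage_mul, ih]
  ext w
  simp only [Language.kstar_eq_iSup_pow, Language.mem_iSup, ← pow, mem_substLanguage]
  exact ⟨fun ⟨u, ⟨n, hu⟩, hw⟩ => ⟨n, u, hu, hw⟩, fun ⟨n, u, hu, hw⟩ => ⟨u, ⟨n, hu⟩, hw⟩⟩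

theorem matches'_subst (f : α → RegularExpression β) (P : RegularExpression α) :
    (subst f P).matches' = substLanguage (fun a => (f a).matches') P.matches' := by
  induction P with
  | zero => ext w; exact ⟨False.elim, fun ⟨_, hu, _⟩ => hu⟩
  | epsilon => exact (substLanguage_singleton _ []).symm
  | char a =>
    exact (mul_one _).symm.trans (substLanguage_singleton (fun a => (f a).matches') [a]).symm
  | plus P Q hP hQ =>
    ext w
    simp only [subst, matches', matches'_add, Language.mem_add, hP, hQ, mem_substLanguage,
      or_and_right, exists_or]
  | comp P Q hP hQ => simp only [subst, matches', matches'_mul, hP, hQ, substLanguage_mul]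
  | star P hP => simp only [subst, matches', hP, substLanguage_kstar]

end Expressions

/-- The regular expression for the blocks of zeros with lengths `a, a + 2, a + 4, …`. -/
def zerosFrom (a : ℕ) : RegularExpression Bool :=
  word (List.replicate a false) * star (word (List.replicate 2 false))

theorem mem_zerosFrom {a : ℕ} {w : List Bool} :
    w ∈ (zerosFrom a).matches' ↔ ∃ k, w = List.replicate (a + 2 * k) false := by
  simp only [zerosFrom, mem_mul, mem_star_word, mem_word, List.flatten_replicate_replicate]
  simp [mul_comm, eq_comm]

/-- The regular expression for the codes of single numbers that are at least `c`. -/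
def numeral (c : ℕ) : RegularExpression Bool := word (unary [c]) * star (word [false])

theorem mem_numeral {c : ℕ} {w : List Bool} :
    w ∈ (numeral c).matches' ↔ ∃ n, w = unary [n + c] := by
  simp only [numeral, mem_mul, mem_star_word, mem_word]
  simp [add_comm _ c, eq_comm]

theorem mem_numeral_pow {c k : ℕ} {w : List Bool} :
    w ∈ (numeral c ^ k).matches' ↔ ∃ l : List ℕ, l.length = k ∧ w = unary (l.map (· + c)) := by
  induction k generalizing w with
  | zero => simp
  | succ k ih =>
    rw [matches'_pow, pow_succ', Language.mem_mul, ← matches'_pow]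
    simp only [ih, mem_numeral]
    constructor
    · rintro ⟨-, ⟨n, rfl⟩, -, ⟨l, rfl, rfl⟩, rfl⟩
      exact ⟨n :: l, rfl, by simp⟩
    · rintro ⟨l, hl, rfl⟩
      obtain ⟨n, l, rfl⟩ := List.exists_cons_of_length_eq_add_one hl
      exact ⟨_, ⟨n, rfl⟩, _, ⟨l, by simpa using hl, rfl⟩, by simp⟩

/-! ### Patterns that detect a discrepancy between two numbers -/

/-- The numbers `1, c, c + 2, c + 4, …`, used as lengths of blocks of zeros. -/
def lengths (c : ℕ) : Set ℕ := {n | n = 1 ∨ ∃ k, n = c + 2 * k}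

/-- The regular expression for the blocks of zeros with length in `lengths c`. -/
def spacer (c : ℕ) : RegularExpression Bool := word [false] + zerosFrom c

theorem mem_spacer {c : ℕ} {w : List Bool} :
    w ∈ (spacer c).matches' ↔ ∃ n ∈ lengths c, w = List.replicate n false := by
  rw [spacer, matches'_add, Language.mem_add, mem_word, mem_zerosFrom]
  constructor
  · rintro (rfl | ⟨k, rfl⟩)
    exacts [⟨1, .inl rfl, rfl⟩, ⟨_, .inr ⟨k, rfl⟩, rfl⟩]
  · rintro ⟨-, rfl | ⟨k, rfl⟩, rfl⟩
    exacts [.inl rfl, .inr ⟨k, rfl⟩]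

-- The sets `lengths 2 + 1` and `lengths 4` are disjoint, so equal numbers admit no such
-- decomposition, while every nonzero integer is a difference of their elements.
theorem ne_iff_exists_lengths {x y : ℕ} :
    x ≠ y ↔ ∃ m, ∃ p ∈ lengths 2, ∃ q ∈ lengths 4, x + 4 = m + p + 1 ∧ y + 4 = m + q := by
  constructor
  · intro h
    rcases lt_or_gt_of_ne h with h | h <;> rcases Nat.even_or_odd' (x + y) with ⟨k, hk | hk⟩
    · exact ⟨x + 2, 1, .inl rfl, y - x + 2, .inr ⟨k - x - 1, by omega⟩, by omega, by omega⟩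
    · exact ⟨x + 1, 2, .inr ⟨0, rfl⟩, y - x + 3, .inr ⟨k - x, by omega⟩, by omega, by omega⟩
    · exact ⟨y + 3, x - y, .inr ⟨k - y - 1, by omega⟩, 1, .inl rfl, by omega, by omega⟩
    · exact ⟨y, x - y + 3, .inr ⟨k - y + 1, by omega⟩, 4, .inr ⟨0, rfl⟩, by omega, by omega⟩
  · rintro ⟨m, p, rfl | ⟨k, rfl⟩, q, rfl | ⟨j, rfl⟩, hx, hy⟩ <;> omega

/-- The pattern `x₀ x₁ x₂ x₁ x₃ x₄`. -/
def framePattern : TFPattern := [0, 1, 2, 1, 3, 4]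

/-- The constraint that `x₁` is the code of a number, `x₂` is matched by `R`, and `x₃` is a
block of zeros with length in `lengths 4` followed by `#`. -/
def frameConstraint (R : RegularExpression Bool) : RegConstraint :=
  [(1, numeral 0), (2, R), (3, spacer 4 * word [true])]

/-- The language of `framePattern` under `frameConstraint R`. -/
def frameLang (R : RegularExpression Bool) : Set (List Bool) :=
  LangE (framePattern.map Sum.inr) (constraintOf (frameConstraint R))

theorem valid_frame_iff {R : RegularExpression Bool} {h : ℕ → List Bool} :
    Valid (constraintOf (frameConstraint R)) (framePattern.map Sum.inr) h ↔
      h 1 ∈ (numeral 0).matches' ∧ h 2 ∈ R.matches' ∧ h 3 ∈ (spacer 4 * word [true]).matches' := by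
  refine ⟨fun hv => ⟨hv 1 ?_, hv 2 ?_, hv 3 ?_⟩, fun ⟨h1, h2, h3⟩ x hx => ?_⟩
  · simp [varsOf, framePattern]
  · simp [varsOf, framePattern]
  · simp [varsOf, framePattern]
  · obtain rfl | rfl | rfl | rfl | rfl : x = 0 ∨ x = 1 ∨ x = 2 ∨ x = 3 ∨ x = 4 := by
      simpa [varsOf, framePattern, or_left_comm] using hx
    exacts [trivial, h1, h2, h3, trivial]

theorem mem_frameLang {R : RegularExpression Bool} {w : List Bool} :
    w ∈ frameLang R ↔ ∃ u ∈ R.matches', ∃ y m, ∃ q ∈ lengths 4, ∃ z,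
      w = y ++ unary [m] ++ u ++ unary [m + q] ++ true :: z := by
  simp only [frameLang, LangE, Set.mem_ofPred_eq, valid_frame_iff, mem_numeral, mem_mul, mem_spacer,
    mem_word]
  constructor
  · rintro ⟨h, ⟨⟨m, hm⟩, hR, -, ⟨q, hq, rfl⟩, -, rfl, h3⟩, rfl⟩
    refine ⟨h 2, hR, h 0, m, q, hq, h 4, ?_⟩
    simp [framePattern, applySub, hm, ← h3, unary_singleton_add, -unary_cons]
  · rintro ⟨u, hu, y, m, q, hq, z, rfl⟩
    let h : ℕ → List Bool
      | 0 => y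
      | 1 => unary [m]
      | 2 => u
      | 3 => List.replicate q false ++ [true]
      | _ => z
    refine ⟨h, ⟨⟨m, rfl⟩, hu, _, ⟨q, hq, rfl⟩, _, rfl, rfl⟩, ?_⟩
    simp [framePattern, applySub, h, unary_singleton_add, -unary_cons]

theorem frameLang_add {R T : RegularExpression Bool} :
    frameLang (R + T) = frameLang R ∪ frameLang T := by
  ext w
  simp only [Set.mem_union, mem_frameLang, matches'_add, Language.mem_add, or_and_right, exists_or]

/-! ### Histories -/

section Histories

variable {K : ℕ}

/-- The number naming an action in a history. -/
noncomputable def code (a : Action K) : ℕ := Fintype.equivFin (Action K) a + 1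

theorem code_injective : Function.Injective (code (K := K)) := fun _ _ h =>
  (Fintype.equivFin _).injective (Fin.ext (Nat.succ_injective h))

/-- The contents of the registers, shifted by `4`: this makes them nonzero, and leaves room for the
decomposition in `ne_iff_exists_lengths`. -/
def fields (s : Store K) : List ℕ := List.ofFn fun i => s i + 4

theorem zero_notMem_fields (s : Store K) : 0 ∉ fields s := by simp [fields, List.mem_ofFn]

theorem exists_fields_eq (s : Store K) (i : Fin K) :
    ∃ U V : List ℕ, U.length = K - 1 - i ∧ V.length = i ∧ fields s = V ++ (s i + 4) :: U := by
  refine ⟨(fields s).drop (i + 1), (fields s).take i, by simp [fields]; omega, by simp [fields], ?_⟩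
  have hi : (i : ℕ) < (fields s).length := by simp [fields]
  have hget : (fields s)[(i : ℕ)] = s i + 4 := by simp [fields]
  rw [← hget, List.cons_getElem_drop_succ, List.take_append_drop]

theorem eq_of_fields_append_eq {s : Store K} {i : Fin K} {U V X : List ℕ} {x : ℕ}
    (hV : V.length = i) (h : fields s ++ X = V ++ x :: U) : x = s i + 4 := by
  obtain ⟨U', V', -, hV', hs⟩ := exists_fields_eq s i
  rw [hs, List.append_assoc] at h
  exact (List.cons.inj (List.append_inj h (hV'.trans hV.symm)).2).1.symm

theorem eq_of_append_fields_eq {s : Store K} {i : Fin K} {U V X : List ℕ} {x : ℕ}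
    (hU : U.length = K - 1 - i) (h : X ++ fields s = V ++ x :: U) : x = s i + 4 := by
  obtain ⟨U', V', hU', -, hs⟩ := exists_fields_eq s i
  rw [hs, ← List.append_assoc] at h
  exact (List.cons.inj (List.append_inj' h (by simp [hU, hU'])).2).1.symm

/-- The sequence `h` of actions and resulting stores is a run from `s`. -/
def Trace (s : Store K) : List (Action K × Store K) → Prop
  | [] => True
  | (a, t) :: h => Step a s t ∧ Trace t h

theorem exists_exec_iff {u : List (Action K)} {s : Store K} :
    (∃ t, Exec u s t) ↔ ∃ h, h.map Prod.fst = u ∧ Trace s h := by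
  induction u generalizing s with
  | nil => simp [Exec, Trace]
  | cons a u ih =>
    simp only [Exec, exists_comm (α := Store K), exists_and_left, ih]
    constructor
    · rintro ⟨r, hr, h, rfl, hh⟩
      exact ⟨(a, r) :: h, rfl, hr, hh⟩
    · rintro ⟨h, hu, hh⟩
      obtain ⟨⟨b, r⟩, h, rfl, rfl, rfl⟩ := List.map_eq_cons_iff.1 hu
      exact ⟨r, hh.1, h, rfl, hh.2⟩

theorem halts_iff_exists_trace {P : Program K} :
    Halts P ↔ ∃ h, h.map Prod.fst ∈ P.matches' ∧ Trace 0 h := by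
  have : Halts P ↔ ∃ u ∈ P.matches', ∃ t, Exec u 0 t := by
    simp only [Halts, Run]
    exact exists_comm.trans (by simp only [exists_and_left])
  simp only [this, exists_exec_iff]
  exact ⟨fun ⟨_, hu, h, e, hh⟩ => ⟨h, e ▸ hu, hh⟩, fun ⟨h, hu, hh⟩ => ⟨_, hu, h, rfl, hh⟩⟩

/-- The list of numbers recording an action and the resulting store. It is introduced by `0`, which
occurs nowhere else in it. -/
noncomputable def record (x : Action K × Store K) : List ℕ := 0 :: code x.1 :: fields x.2

/-- The list of numbers recording the initial store `s` and the sequence `h` of actions and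
resulting stores. -/
noncomputable def history (s : Store K) (h : List (Action K × Store K)) : List ℕ :=
  fields s ++ h.flatMap record

theorem history_cons (s : Store K) (a : Action K) (t : Store K) (h : List (Action K × Store K)) :
    history s ((a, t) :: h) = fields s ++ 0 :: code a :: history t h := by
  simp [history, record]

theorem history_eq_of_not_trace {s : Store K} {h : List (Action K × Store K)} (hh : ¬ Trace s h) :
    ∃ (a : Action K) (r t : Store K), ¬ Step a r t ∧
      ∃ X Y, history s h = X ++ (fields r ++ 0 :: code a :: fields t) ++ Y := by
  induction h generalizing s with
  | nil => exact absurd trivial hh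
  | cons x h ih =>
    obtain ⟨a, t⟩ := x
    by_cases ha : Step a s t
    · obtain ⟨b, r, u, hb, X, Y, e⟩ := ih fun ht => hh ⟨ha, ht⟩
      exact ⟨b, r, u, hb, fields s ++ 0 :: code a :: X, Y, by simp [history_cons, e]⟩
    · exact ⟨a, s, t, ha, [], h.flatMap record, by simp [history, record]⟩

theorem eq_or_eq_append_of_append_cons_eq {α : Type*} {x : α} {A B X Y : List α} (hx : x ∉ A)
    (h : A ++ x :: B = X ++ x :: Y) :
    X = A ∧ B = Y ∨ ∃ X', X = A ++ x :: X' ∧ B = X' ++ x :: Y := by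
  rcases List.append_eq_append_iff.1 h with ⟨X', rfl, h'⟩ | ⟨X', rfl, h'⟩
  · rcases List.cons_eq_append_iff.1 h' with ⟨rfl, e⟩ | ⟨X', rfl, e⟩
    · exact .inl ⟨List.append_nil A, (List.cons.inj e).2.symm⟩
    · exact .inr ⟨X', rfl, e⟩
  · rcases List.cons_eq_append_iff.1 h' with ⟨rfl, e⟩ | ⟨X', rfl, -⟩
    · exact .inl ⟨(List.append_nil X).symm, (List.cons.inj e).2⟩
    · simp at hx

theorem Trace.step_of_history_eq {s : Store K} {h : List (Action K × Store K)} (hh : Trace s h)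
    {R X Y Z : List ℕ} {c : ℕ} (hR : 0 ∉ R) (hZ : 0 ∉ Z)
    (e : R ++ history s h ++ Z = X ++ 0 :: c :: Y) :
    ∃ (a : Action K) (r t : Store K), Step a r t ∧ c = code a ∧
      (∃ X', X = X' ++ fields r) ∧ ∃ Y', Y = fields t ++ Y' := by
  induction h generalizing s R X with
  | nil =>
    have : 0 ∉ R ++ history s [] ++ Z := by simp [history, hR, hZ, zero_notMem_fields]
    simp [e] at this
  | cons x h ih =>
    obtain ⟨a, t⟩ := x
    have e' : (R ++ fields s) ++ 0 :: code a :: (history t h ++ Z) = X ++ 0 :: c :: Y := by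
      simpa [history_cons] using e
    have hRs : 0 ∉ R ++ fields s := by simp [hR, zero_notMem_fields]
    rcases eq_or_eq_append_of_append_cons_eq hRs e' with ⟨rfl, h'⟩ | ⟨X', rfl, h'⟩
    · obtain ⟨rfl, rfl⟩ := List.cons.inj h'
      exact ⟨a, s, t, hh.1, rfl, ⟨R, rfl⟩, _, by rw [history, List.append_assoc]⟩
    · obtain ⟨b, r, u, hb, hc, ⟨X'', rfl⟩, hY⟩ := ih hh.2 (R := [code a]) (by simp [code]) h'
      exact ⟨b, r, u, hb, hc, ⟨R ++ fields s ++ 0 :: X'', by simp⟩, hY⟩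

/-! ### The reduction -/

/-- The condition on the first and the last number in a word of the frame under which the frame
matches. For numbers shifted by `4`, it expresses that the last is not the first plus `c.toNat`. -/
def Apart (c : Bool) (x y : ℕ) : Prop :=
  ∃ m, ∃ p ∈ lengths 2, ∃ q ∈ lengths 4, x = m + ((!c).toNat + p) ∧ y = m + q

theorem not_holds_iff {l : Link K} {s t : Store K} :
    ¬ l.Holds s t ↔ Apart l.inc (s l.src + 4) (t l.tgt + 4) := by
  have shift {x m p : ℕ} : x + l.inc.toNat + 4 = m + p + 1 ↔ x + 4 = m + ((!l.inc).toNat + p) := by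
    cases l.inc <;> grind
  rw [Link.Holds, eq_comm, ← ne_eq, ne_iff_exists_lengths, Apart]
  simp only [shift]

/-- The regular expression which, in the frame, matches the factors of a list of numbers from the
source to the target of the link `l` of the action `a`, if these are `Apart`. -/
noncomputable def clash (a : Action K) (l : Link K) : RegularExpression Bool :=
  word (List.replicate (!l.inc).toNat false) * (spacer 2 * (numeral 0 ^ (K - 1 - l.src) *
    (word (unary [0, code a]) * numeral 0 ^ (l.tgt : ℕ))))

theorem mem_clash {a : Action K} {l : Link K} {w : List Bool} :
    w ∈ (clash a l).matches' ↔ ∃ p ∈ lengths 2, ∃ U V : List ℕ, U.length = K - 1 - l.src ∧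
      V.length = l.tgt ∧
      w = List.replicate ((!l.inc).toNat + p) false ++ unary (U ++ 0 :: code a :: V) := by
  simp only [clash, mem_mul, mem_word, mem_spacer, mem_numeral_pow, add_zero, List.map_id']
  constructor
  · rintro ⟨-, rfl, -, ⟨-, ⟨p, hp, rfl⟩, -, ⟨-, ⟨U, hU, rfl⟩, -, ⟨-, rfl, -, ⟨V, hV, rfl⟩, rfl⟩,
      rfl⟩, rfl⟩, rfl⟩
    exact ⟨p, hp, U, V, hU, hV, by
      simp [List.replicate_add, -List.replicate_append_replicate]⟩
  · rintro ⟨p, hp, U, V, hU, hV, rfl⟩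
    exact ⟨_, rfl, _, ⟨_, ⟨p, hp, rfl⟩, _, ⟨_, ⟨U, hU, rfl⟩, _, ⟨_, rfl, _, ⟨V, hV, rfl⟩, rfl⟩,
      rfl⟩, rfl⟩, by
      simp [List.replicate_add, -List.replicate_append_replicate]⟩

/-- The sum of the regular expressions `clash a l` over all links `l` of actions `a`. -/
noncomputable def clashes (K : ℕ) : RegularExpression Bool :=
  (((Finset.univ : Finset (Action K × Link K)).filter fun x => x.2 ∈ x.1).toList.map
    fun x => clash x.1 x.2).sum

theorem mem_frameLang_clashes {w : List Bool} :
    w ∈ frameLang (clashes K) ↔ ∃ a : Action K, ∃ l ∈ a, ∃ U V : List ℕ,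
      U.length = K - 1 - l.src ∧ V.length = l.tgt ∧ ∃ x x', Apart l.inc x x' ∧
        ∃ y z, w = y ++ unary (x :: (U ++ 0 :: code a :: (V ++ [x']))) ++ true :: z := by
  have mem_clashes {w : List Bool} :
      w ∈ (clashes K).matches' ↔ ∃ a : Action K, ∃ l ∈ a, w ∈ (clash a l).matches' := by
    simp [clashes, mem_sum]
  simp only [mem_frameLang, mem_clashes, mem_clash]
  constructor
  · rintro ⟨-, ⟨a, l, hl, p, hp, U, V, hU, hV, rfl⟩, y, m, q, hq, z, rfl⟩
    exact ⟨a, l, hl, U, V, hU, hV, _, _, ⟨m, p, hp, q, hq, rfl, rfl⟩, y, z,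
      by
      simp [List.replicate_add, -List.replicate_append_replicate]⟩
  · rintro ⟨a, l, hl, U, V, hU, hV, -, -, ⟨m, p, hp, q, hq, rfl, rfl⟩, y, z, rfl⟩
    exact ⟨_, ⟨a, l, hl, p, hp, U, V, hU, hV, rfl⟩, y, m, q, hq, z, by
      simp [List.replicate_add, -List.replicate_append_replicate]⟩

theorem mem_frameLang_clashes_of_not_step {a : Action K} {s t : Store K} (h : ¬ Step a s t)
    (y z : List Bool) :
    y ++ unary (fields s ++ 0 :: code a :: fields t) ++ true :: z ∈ frameLang (clashes K) := by
  obtain ⟨l, hl, hst⟩ : ∃ l ∈ a, ¬ l.Holds s t := by simpa [Step] using h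
  obtain ⟨U, V, hU, -, hs⟩ := exists_fields_eq s l.src
  obtain ⟨U', V', -, hV', ht⟩ := exists_fields_eq t l.tgt
  obtain ⟨z', hz⟩ : ∃ z', unary U' ++ true :: z = true :: z' := by cases U' <;> simp
  refine mem_frameLang_clashes.2
    ⟨a, l, hl, U, V', hU, hV', _, _, not_holds_iff.1 hst, y ++ unary V, z', ?_⟩
  simp [hs, ht, hz]

theorem Trace.unary_history_notMem {s : Store K} {h : List (Action K × Store K)} (hh : Trace s h) :
    unary ([1] ++ history s h ++ [2, 1]) ∉ frameLang (clashes K) := by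
  rw [mem_frameLang_clashes]
  rintro ⟨a, l, hl, U, V, hU, hV, x, x', hx, y, z, e⟩
  obtain ⟨l₁, l₂, e⟩ := eq_append_of_unary_eq e
  obtain ⟨b, r, t, hb, hab, ⟨X', hX⟩, Y', hY⟩ :=
    hh.step_of_history_eq (R := [1]) (Z := [2, 1]) (X := l₁ ++ x :: U) (Y := V ++ x' :: l₂)
      (by simp) (by simp) (by simpa using e)
  obtain rfl := code_injective hab
  rw [eq_of_append_fields_eq hU hX.symm, eq_of_fields_append_eq hV hY.symm] at hx
  exact not_holds_iff.2 hx (hb l hl)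

/-- The regular expression for the numbers recording the action `a` and an arbitrary store. -/
noncomputable def block (a : Action K) : RegularExpression Bool :=
  word (unary [0, code a]) * numeral 4 ^ K

theorem mem_block {a : Action K} {w : List Bool} :
    w ∈ (block a).matches' ↔ ∃ t : Store K, w = unary (record (a, t)) := by
  simp only [block, mem_mul, mem_word, mem_numeral_pow]
  constructor
  · rintro ⟨-, rfl, -, ⟨L, hL, rfl⟩, rfl⟩
    refine ⟨fun i => L[(i : ℕ)], ?_⟩
    have : fields (fun i : Fin K => L[(i : ℕ)]) = L.map (· + 4) :=
      List.ext_getElem (by simp [fields, hL]) (by simp [fields])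
    simp [record, this]
  · rintro ⟨t, rfl⟩
    refine ⟨_, rfl, _, ⟨List.ofFn t, List.length_ofFn, rfl⟩, ?_⟩
    simp [record, fields, List.map_ofFn, Function.comp_def]

/-- The regular expression for the histories, correct or not, which start with all registers zero
and follow the program `P`. -/
noncomputable def historyExpr (P : Program K) : RegularExpression Bool :=
  word (unary (fields (0 : Store K))) * subst block P

theorem mem_historyExpr {P : Program K} {w : List Bool} :
    w ∈ (historyExpr P).matches' ↔
      ∃ h : List (Action K × Store K), h.map Prod.fst ∈ P.matches' ∧ w = unary (history 0 h) := by
  have mem_prod {u : List (Action K)} {w : List Bool} :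
      w ∈ (u.map fun a => (block a).matches').prod ↔
        ∃ h : List (Action K × Store K), h.map Prod.fst = u ∧ w = unary (h.flatMap record) := by
    induction u generalizing w with
    | nil => simp
    | cons a u ih =>
      simp only [List.map_cons, List.prod_cons, Language.mem_mul, mem_block, ih]
      constructor
      · rintro ⟨-, ⟨t, rfl⟩, -, ⟨h, rfl, rfl⟩, rfl⟩
        exact ⟨(a, t) :: h, rfl, by simp⟩
      · rintro ⟨h, hu, rfl⟩
        obtain ⟨⟨b, t⟩, h, rfl, rfl, rfl⟩ := List.map_eq_cons_iff.1 hu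
        exact ⟨_, ⟨t, rfl⟩, _, ⟨h, rfl, rfl⟩, by simp⟩
  simp only [historyExpr, mem_mul, mem_word, matches'_subst, mem_substLanguage, mem_prod]
  constructor
  · rintro ⟨-, rfl, -, ⟨u, hu, h, rfl, rfl⟩, rfl⟩
    exact ⟨h, hu, by simp [history]⟩
  · rintro ⟨h, hu, rfl⟩
    exact ⟨_, rfl, _, ⟨_, hu, h, rfl, rfl⟩, by simp [history]⟩

theorem frameLang_historyExpr_subset_iff {P : Program K} :
    frameLang (historyExpr P) ⊆ frameLang (clashes K) ↔ ¬ Halts P := by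
  rw [halts_iff_exists_trace]
  constructor
  · rintro hsub ⟨h, hP, hh⟩
    refine hh.unary_history_notMem (hsub (mem_frameLang.2 ?_))
    exact ⟨_, mem_historyExpr.2 ⟨h, hP, rfl⟩, [], 1, 1, .inl rfl, [false], by simp⟩
  · intro hP w hw
    obtain ⟨v, hmem, y, m, q, -, z, rfl⟩ := mem_frameLang.1 hw
    obtain ⟨h, hu, rfl⟩ := mem_historyExpr.1 hmem
    obtain ⟨a, r, t, ha, X, Y, e⟩ := history_eq_of_not_trace fun hh => hP ⟨h, hu, hh⟩
    obtain ⟨z', hz⟩ : ∃ z', unary Y ++ unary [m + q] ++ true :: z = true :: z' := by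
      cases Y <;> simp
    have mem := mem_frameLang_clashes_of_not_step ha (y ++ unary [m] ++ unary X) z'
    rw [← hz] at mem
    simpa [e] using mem

theorem frameLang_add_historyExpr_eq_iff {P : Program K} :
    frameLang (clashes K + historyExpr P) = frameLang (clashes K) ↔ ¬ Halts P := by
  rw [frameLang_add, Set.union_eq_left, frameLang_historyExpr_subset_iff]

theorem primrec_encRE_pow (P : RegularExpression Bool) : Primrec fun n : ℕ => encRE (P ^ n) := by
  have primrec_comp : Primrec fun e => Nat.pair 4 (Nat.pair e (encRE P)) :=
    Primrec₂.natPair.comp (.const 4) (Primrec₂.natPair.comp .id (.const _))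
  refine (Primrec.nat_rec₁ (encRE 1) (primrec_comp.comp₂ .right)).of_eq fun n => ?_
  induction n with
  | zero => rfl
  | succ n ih => exact congrArg (fun e => Nat.pair 4 (Nat.pair e (encRE P))) ih

theorem primrec_encRE_historyExpr (A Q : Program K) :
    Primrec fun n => encRE (clashes K + historyExpr (A ^ n * Q)) := by
  have eq (n : ℕ) : historyExpr (A ^ n * Q) =
      word (unary (fields (0 : Store K))) * (subst block A ^ n * subst block Q) := by
    rw [historyExpr, subst_pow_mul]
  simp only [eq]
  have pair := @Primrec₂.natPair
  exact pair.comp (.const 3) (pair.comp (.const _) (pair.comp (.const 4) (pair.comp (.const _)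
    (pair.comp (.const 4) (pair.comp (primrec_encRE_pow _) (.const _))))))

/-- The pair of inputs given by `framePattern` under `frameConstraint R` and `frameConstraint T`. -/
def frameInput (R T : RegularExpression Bool) :
    (TFPattern × RegConstraint) × (TFPattern × RegConstraint) :=
  ((framePattern, frameConstraint R), (framePattern, frameConstraint T))

theorem primrec_encodeTFInput_frameInput {R : ℕ → RegularExpression Bool}
    (hR : Primrec fun n => encRE (R n)) (T : RegularExpression Bool) :
    Primrec fun n => encodeTFInput (frameInput (R n) T) :=
  Primrec.encode.comp (.pair (.pair (.const framePattern) (Primrec.list_cons.comp (.const _)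
    (Primrec.list_cons.comp (.pair (.const 2) hR) (.const _))))
    (.const (framePattern, (frameConstraint T).map fun q => (q.1, encRE q.2))))

end Histories

end PatternEquivalence

open PatternEquivalence

/-- The equivalence problem for erasing pattern languages with regular constraints over
the binary alphabet is undecidable already for terminal-free patterns. -/
theorem equivalence_EPatternRegConstraints_terminalFree_undecidable :
    ¬ ∃ f : ℕ → Bool, Computable f ∧
      ∀ inp : (TFPattern × RegConstraint) × (TFPattern × RegConstraint),
        (f (encodeTFInput inp) = true ↔
          LangE (inp.1.1.map Sum.inr) (constraintOf inp.1.2) =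
            LangE (inp.2.1.map Sum.inr) (constraintOf inp.2.2)) := by
  rintro ⟨f, hf, h⟩
  obtain ⟨K, A, Q, hAQ⟩ := exists_not_computablePred_halts
  have primrec_input := primrec_encodeTFInput_frameInput (primrec_encRE_historyExpr A Q) (clashes K)
  have decides (n : ℕ) :
      f (encodeTFInput (frameInput (clashes K + historyExpr (A ^ n * Q)) (clashes K))) = true ↔
        ¬ Halts (A ^ n * Q) :=
    (h (frameInput _ _)).trans frameLang_add_historyExpr_eq_iff
  have computable_not_halts : ComputablePred fun n => ¬ Halts (A ^ n * Q) :=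
    ComputablePred.computable_iff.2
      ⟨_, hf.comp primrec_input.to_comp, funext fun n => propext (decides n).symm⟩
  exact hAQ (computable_not_halts.not.of_eq fun n => not_not)
end

section
/- With α, r_α, β, r_β as in the construction: if h is a substitution that is r_α-valid on α and h(α) ≠ v 0u0 v for every u ∈ Σ* with |u|_{###} = 0, then h(α) ∈ L_E(β, r_β). -/
/-- The word `v = 0###0`. -/
def vWord : List Bin := [false, true, true, true, false]

/-- `u` contains no occurrence of `###` as a factor, i.e. `|u|_{###} = 0`. -/
def NoTripleHash (u : List Bin) : Prop := ¬ ([true, true, true] <:+: u)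

/-- The constraint language of the variable `α₁`:
`{0w0 : w ∈ Σ*, |w|_{###} = 0} ∪ {ε}`. -/
def Ra1 : Set (List Bin) :=
  {w | ∃ u, NoTripleHash u ∧ w = [false] ++ u ++ [false]} ∪ {[]}

/-- The constraint language of the variable `ỹ`:
`Σ* \ { v u v : u ∈ Ra1, u ≠ ε }`. -/
def Ryt : Set (List Bin) :=
  {w | ¬ ∃ u ∈ Ra1, u ≠ [] ∧ w = vWord ++ u ++ vWord}

/-- All the data and assumptions of the construction: the patterns with regular
constraints `(α, r_α)` and `(β, r_β)` built from the predicates `γ₁, …, γ_μ`. -/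
structure Construction where
  /-- the variable `x_v` of `α` -/
  xv : ℕ
  /-- the variable `α₁` of `α` -/
  a1 : ℕ
  /-- the variable `ỹ` of `α` -/
  yt : ℕ
  /-- the number of predicates -/
  μ : ℕ
  /-- the variables `x₁, …, x_μ` of `β` -/
  xs : Fin μ → ℕ
  /-- the terminal-free predicate patterns `γ₁, …, γ_μ` (words over variables) -/
  γ : Fin μ → List ℕ
  /-- the variable `z̃` of `β` -/
  zt : ℕ
  /-- the constraint `r_α` -/
  rα : ℕ → Set (List Bin)
  /-- the constraint `r_β` -/
  rβ : ℕ → Set (List Bin)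
  xv_ne_a1 : xv ≠ a1
  xv_ne_yt : xv ≠ yt
  a1_ne_yt : a1 ≠ yt
  hxv : rα xv = {[], vWord}
  ha1 : rα a1 = Ra1
  hyt : rα yt = Ryt
  xs_inj : Function.Injective xs
  xs_ne_zt : ∀ i, xs i ≠ zt
  xs_fresh : ∀ i, xs i ≠ xv ∧ xs i ≠ a1 ∧ xs i ≠ yt
  zt_fresh : zt ≠ xv ∧ zt ≠ a1 ∧ zt ≠ yt
  γ_disj : ∀ i j, i ≠ j → ∀ x ∈ γ i, x ∉ γ j
  γ_fresh : ∀ i, ∀ x ∈ γ i,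
    (∀ j, x ≠ xs j) ∧ x ≠ zt ∧ x ≠ xv ∧ x ≠ a1 ∧ x ≠ yt
  hrβxs : ∀ i, rβ (xs i) = {[], vWord}
  hrβzt : rβ zt = Ryt
  hrβγ_eps : ∀ i, ∀ x ∈ γ i, [] ∈ rβ x
  hγ_lang : ∀ i, ∀ w ∈ LangE ((γ i).map Sum.inr) rβ,
    w = [] ∨ ∃ u, NoTripleHash u ∧ w = [false] ++ u ++ [false]

/-- The pattern `α = x_v α₁ x_v ỹ`. -/
def Construction.α (C : Construction) : Pattern :=
  [Sum.inr C.xv, Sum.inr C.a1, Sum.inr C.xv, Sum.inr C.yt]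

/-- The pattern `β̂ᵢ = xᵢ γᵢ xᵢ`. -/
def Construction.βhat (C : Construction) (i : Fin C.μ) : Pattern :=
  Sum.inr (C.xs i) :: ((C.γ i).map Sum.inr ++ [Sum.inr (C.xs i)])

/-- The pattern `β = β̂₁ ⋯ β̂_μ z̃`. -/
def Construction.β (C : Construction) : Pattern :=
  (List.ofFn C.βhat).flatten ++ [Sum.inr C.zt]

/-!
Every variable of `β` other than `z̃` may be erased, and `z̃` occurs exactly once. Erasing all the
others leaves the image of `z̃` alone, so `L_E(β, r_β)` contains all of `r_β(z̃)`, and `r_β(z̃)`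
misses only the words `v 0u0 v` with `|u|_{###} = 0`.
-/

theorem applySub_map_inr (s : ℕ → List Bin) (q : List ℕ) :
    applySub s (q.map Sum.inr) = q.flatMap s := by
  induction q with
  | nil => rfl
  | cons x q ih => simp only [List.map_cons, List.flatMap_cons, applySub, Sum.elim_inr, ih]

theorem valid_map_inr_iff {r : ℕ → Set (List Bin)} {q : List ℕ} {s : ℕ → List Bin} :
    Valid r (q.map Sum.inr) s ↔ ∀ x ∈ q, s x ∈ r x := by
  simp only [Valid, varsOf, Set.mem_ofPred_eq, List.mem_map_of_injective Sum.inr_injective]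

theorem subset_langE_append_of_nil_mem {r : ℕ → Set (List Bin)} {q : List ℕ} {z : ℕ}
    (hz : z ∉ q) (hq : ∀ x ∈ q, [] ∈ r x) :
    r z ⊆ LangE ((q ++ [z]).map Sum.inr) r := by
  intro w hw
  let s : ℕ → List Bin := Function.update (fun _ => []) z w
  have hsz : s z = w := Function.update_self ..
  have hsq : ∀ x ∈ q, s x = [] := fun x hx =>
    Function.update_of_ne (ne_of_mem_of_not_mem hx hz) ..
  refine ⟨s, valid_map_inr_iff.mpr fun x hx => ?_, ?_⟩
  · rcases List.mem_append.mp hx with hx | hx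
    · exact hsq x hx ▸ hq x hx
    · obtain rfl := List.mem_singleton.mp hx
      exact hsz.symm ▸ hw
  · calc applySub s ((q ++ [z]).map Sum.inr)
        = q.flatMap s ++ s z := by
          rw [applySub_map_inr, List.flatMap_append, List.flatMap_singleton]
      _ = w := by rw [List.flatMap_eq_nil_iff.mpr hsq, hsz, List.nil_append]

theorem mem_ryt_iff {w : List Bin} :
    w ∈ Ryt ↔ ∀ u, NoTripleHash u → w ≠ vWord ++ ([false] ++ u ++ [false]) ++ vWord := by
  constructor
  · rintro hw u hu rfl
    exact hw ⟨_, Or.inl ⟨u, hu, rfl⟩, by simp, rfl⟩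
  · rintro hw ⟨_, ⟨u, hu, rfl⟩ | rfl, hne, rfl⟩
    · exact hw u hu rfl
    · exact hne rfl

namespace Construction

variable (C : Construction)

/-- The word of variables `x₁ γ₁ x₁ ⋯ x_μ γ_μ x_μ` underlying the terminal-free prefix
`β̂₁ ⋯ β̂_μ` of `β`, so that the prefix is its image under `Sum.inr`. -/
def βPrefix : List ℕ :=
  (List.ofFn fun i => C.xs i :: (C.γ i ++ [C.xs i])).flatten

theorem β_eq_map_inr : C.β = (C.βPrefix ++ [C.zt]).map Sum.inr := by
  have hβhat : C.βhat = List.map Sum.inr ∘ fun i => C.xs i :: (C.γ i ++ [C.xs i]) := by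
    funext i
    simp [βhat]
  simp [β, βPrefix, hβhat, List.map_flatten, List.map_ofFn]

theorem mem_βPrefix_iff {x : ℕ} : x ∈ C.βPrefix ↔ ∃ i, x = C.xs i ∨ x ∈ C.γ i := by
  simp only [βPrefix, List.mem_flatten, List.mem_ofFn]
  grind

theorem zt_notMem_βPrefix : C.zt ∉ C.βPrefix := by
  rw [mem_βPrefix_iff]
  rintro ⟨i, hx | hγ⟩
  · exact C.xs_ne_zt i hx.symm
  · exact (C.γ_fresh i _ hγ).2.1 rfl

theorem nil_mem_rβ_of_mem_βPrefix {x : ℕ} (hx : x ∈ C.βPrefix) : [] ∈ C.rβ x := by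
  obtain ⟨i, rfl | hγ⟩ := C.mem_βPrefix_iff.mp hx
  · rw [C.hrβxs]
    exact Set.mem_insert _ _
  · exact C.hrβγ_eps i x hγ

theorem ryt_subset_langE_β : Ryt ⊆ LangE C.β C.rβ := by
  rw [← C.hrβzt, C.β_eq_map_inr]
  exact subset_langE_append_of_nil_mem C.zt_notMem_βPrefix fun _ => C.nil_mem_rβ_of_mem_βPrefix

end Construction

theorem nonspecial_words_of_alpha_in_beta_general (C : Construction) {w : List Bin}
    (hw : ∀ u : List Bin, NoTripleHash u →
      w ≠ vWord ++ ([false] ++ u ++ [false]) ++ vWord) :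
    w ∈ LangE C.β C.rβ :=
  C.ryt_subset_langE_β (mem_ryt_iff.mpr hw)

/-- If `h` is `r_α`-valid on `α` and `h(α)` is not of the form `v 0u0 v` with
`|u|_{###} = 0`, then `h(α) ∈ L_E(β, r_β)`. -/
theorem nonspecial_words_of_alpha_in_beta (C : Construction)
    (h : ℕ → List Bin) (hvalid : Valid C.rα C.α h)
    (hform : ∀ u : List Bin, NoTripleHash u →
      applySub h C.α ≠ vWord ++ ([false] ++ u ++ [false]) ++ vWord) :
    applySub h C.α ∈ LangE C.β C.rβ :=
  nonspecial_words_of_alpha_in_beta_general C hform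
end
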